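/- arXiv:1811.02996 — 10 statements merged into one kernel-verified Lean document; each statement's English description precedes it below -/
import Mathlib

section
/- Let q = 2^f ≥ 4 be a power of 2. Then ρ(PSL₂(q)) = q² + 1. -/
/-!
In characteristic `2` the centre of `SL₂(F)` is trivial, so everything happens in `SL₂(F)`, acting
on the plane `F × F`. Write `q = |F| ≥ 4`.

*Tori and forms.* A pair `p = (y, z)` encodes the quadratic form `Q_p(u, v) = z u² + u v + y v²`;
these `q²` forms are exactly those whose polar form is the determinant form `bil`. The matrices
preserving `Q_p` and lying in the quadratic algebra it defines form a cyclic subgroup `tor p`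
(a maximal torus), and every matrix of nonzero trace lies in exactly one of them (`tor_unique`,
`exists_mem_tor`). The torus is transitive on each nonzero level set of `Q_p` (`tor_trans`), and
acts with arbitrary eigenvalues on a zero of `Q_p` (`tor_eigen`). The matrices of trace zero are
the transvections `tau w : x ↦ x + bil w x • w` (`exists_eq_tau`), and `g (tau w) g⁻¹ = tau (g w)`.

*Upper bound.* The stabilizer of one line, the `q (q - 1)` tori not contained in it, and the `q`
groups of transvections along the other lines form a partition with at most `1 + q (q - 1) + q`
members (`exists_partition`).

*Lower bound.* Let `P` be a partition. A torus is cyclic, so it lies in a single member of `P`, and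
a member meeting a torus nontrivially contains it. The crux is that if a member contains two
distinct tori, then their forms share a zero `w` (`exists_common_zero`), and the member is the whole
stabilizer of the line `[w]` (`fixes_of_tau`, `mem_of_fixes`): otherwise the member would
contain transvections in two directions, and these generate `SL₂(F)` (`eq_top_of_tau`).
An injection from the `q²` forms into `P` that misses a member is then obtained as follows
(`exists_injective_of_partition`).

* If no member contains two tori, send a form to the member containing its torus. Some transvection
  lies in none of these members (`exists_tau_notMem`). Otherwise, `tau w` belonging to the member
  of `p` forces `Q_p(w) = 1`, and any two of the forms so obtained share a zero; comparing the forms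
  attached to the multiples of one vector shows that every nonzero `m` satisfies `m² + m = 0`,
  which is impossible for `q ≥ 4`.
* If a member `H` is the stabilizer of `[w]`, send a form with `Q_p(w) ≠ 0` to the member containing
  its torus, and a form with `Q_p(w) = 0` to the member containing the transvection along its
  second zero. The latter members contain no torus, and `H` is missed.
-/

open Pointwise

/-- A cover of a group `G`: a finite family of proper subgroups whose union is all of `G`. -/
def IsCover {G : Type*} [Group G] (P : Finset (Subgroup G)) : Prop :=
  (∀ H ∈ P, H ≠ ⊤) ∧ ∀ g : G, ∃ H ∈ P, g ∈ H

/-- A partition of a group `G`: a cover in which any two distinct members intersect trivially. -/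
def IsPartitionOf {G : Type*} [Group G] (P : Finset (Subgroup G)) : Prop :=
  IsCover P ∧ ∀ H ∈ P, ∀ K ∈ P, H ≠ K → H ⊓ K = ⊥

/-- `σ(G)`: the minimal cardinality of a cover of `G`. -/
noncomputable def sigmaG (G : Type*) [Group G] : ℕ :=
  sInf {n | ∃ P : Finset (Subgroup G), IsCover P ∧ P.card = n}

/-- `ρ(G)`: the minimal cardinality of a partition of `G`. -/
noncomputable def rhoG (G : Type*) [Group G] : ℕ :=
  sInf {n | ∃ P : Finset (Subgroup G), IsPartitionOf P ∧ P.card = n}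

/-- A group is partitionable if it admits a partition. -/
def Partitionable (G : Type*) [Group G] : Prop :=
  ∃ P : Finset (Subgroup G), IsPartitionOf P

namespace PSLTwo

variable {F : Type*} [Field F]

local notation "SL2" => Matrix.SpecialLinearGroup (Fin 2)

/-! ### Matrices acting on the plane -/

/-- The action of a matrix on a column vector, written as a pair. -/
def act (g : SL2 F) (w : F × F) : F × F :=
  (g.1 0 0 * w.1 + g.1 0 1 * w.2, g.1 1 0 * w.1 + g.1 1 1 * w.2)

/-- The trace of a matrix in `SL₂(F)`. -/
def tr (g : SL2 F) : F := g.1 0 0 + g.1 1 1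

/-- The determinant form `w₁ x₂ - w₂ x₁`, written with a plus sign since it is only used in
characteristic `2`. -/
def bil (w x : F × F) : F := w.1 * x.2 + w.2 * x.1

/-- The quadratic form `(u, v) ↦ z u² + u v + y v²` with parameters `p = (y, z)`. -/
def qf (p w : F × F) : F := p.2 * w.1 ^ 2 + w.1 * w.2 + p.1 * w.2 ^ 2

theorem mul_entries (g h : SL2 F) :
    (g * h).1 0 0 = g.1 0 0 * h.1 0 0 + g.1 0 1 * h.1 1 0 ∧
    (g * h).1 0 1 = g.1 0 0 * h.1 0 1 + g.1 0 1 * h.1 1 1 ∧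
    (g * h).1 1 0 = g.1 1 0 * h.1 0 0 + g.1 1 1 * h.1 1 0 ∧
    (g * h).1 1 1 = g.1 1 0 * h.1 0 1 + g.1 1 1 * h.1 1 1 := by
  refine ⟨?_, ?_, ?_, ?_⟩ <;> simp [Matrix.mul_apply, Fin.sum_univ_two]

theorem one_entries : (1 : SL2 F).1 0 0 = 1 ∧ (1 : SL2 F).1 0 1 = 0 ∧
    (1 : SL2 F).1 1 0 = 0 ∧ (1 : SL2 F).1 1 1 = 1 := by
  refine ⟨?_, ?_, ?_, ?_⟩ <;> simp

theorem inv_entries (g : SL2 F) : (g⁻¹).1 0 0 = g.1 1 1 ∧ (g⁻¹).1 0 1 = - g.1 0 1 ∧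
    (g⁻¹).1 1 0 = - g.1 1 0 ∧ (g⁻¹).1 1 1 = g.1 0 0 := by
  rw [Matrix.SpecialLinearGroup.SL2_inv_expl]
  refine ⟨?_, ?_, ?_, ?_⟩ <;> simp

theorem det_entries (g : SL2 F) : g.1 0 0 * g.1 1 1 - g.1 0 1 * g.1 1 0 = 1 := by
  rw [← Matrix.det_fin_two, g.2]

theorem ext_entries {g h : SL2 F} (h00 : g.1 0 0 = h.1 0 0) (h01 : g.1 0 1 = h.1 0 1)
    (h10 : g.1 1 0 = h.1 1 0) (h11 : g.1 1 1 = h.1 1 1) : g = h := by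
  ext i j
  fin_cases i <;> fin_cases j <;> assumption

/-- The matrix with rows `(a, b)` and `(c, d)`. -/
def mkSL (a b c d : F) (h : a * d - b * c = 1) : SL2 F :=
  ⟨!![a, b; c, d], by rw [Matrix.det_fin_two_of]; exact h⟩

theorem mkSL_entries (a b c d : F) (h : a * d - b * c = 1) :
    (mkSL a b c d h).1 0 0 = a ∧ (mkSL a b c d h).1 0 1 = b ∧
    (mkSL a b c d h).1 1 0 = c ∧ (mkSL a b c d h).1 1 1 = d := by
  refine ⟨?_, ?_, ?_, ?_⟩ <;> simp [mkSL]

theorem act_mul (g h : SL2 F) (w : F × F) : act (g * h) w = act g (act h w) := by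
  have := mul_entries g h
  ext <;> simp only [act] <;> grind

theorem act_one (w : F × F) : act (1 : SL2 F) w = w := by
  have := one_entries (F := F)
  ext <;> simp only [act] <;> grind

theorem act_inv_act (g : SL2 F) (w : F × F) : act g⁻¹ (act g w) = w := by
  rw [← act_mul, inv_mul_cancel, act_one]

theorem act_act_inv (g : SL2 F) (w : F × F) : act g (act g⁻¹ w) = w := by
  rw [← act_mul, mul_inv_cancel, act_one]

theorem act_smul (g : SL2 F) (k : F) (w : F × F) : act g (k • w) = k • act g w := by
  ext <;> simp only [act, Prod.smul_fst, Prod.smul_snd, smul_eq_mul] <;> ring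

theorem act_add (g : SL2 F) (w x : F × F) : act g (w + x) = act g w + act g x := by
  ext <;> simp only [act, Prod.fst_add, Prod.snd_add] <;> ring

theorem act_ne_zero (g : SL2 F) {w : F × F} (hw : w ≠ 0) : act g w ≠ 0 := by
  intro h
  apply hw
  rw [← act_inv_act g w, h]
  ext <;> simp [act]

theorem qf_smul (p : F × F) (k : F) (w : F × F) : qf p (k • w) = k ^ 2 * qf p w := by
  simp only [qf, Prod.smul_fst, Prod.smul_snd, smul_eq_mul]; ring

theorem bil_smul_left (k : F) (w x : F × F) : bil (k • w) x = k * bil w x := by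
  simp only [bil, Prod.smul_fst, Prod.smul_snd, smul_eq_mul]; ring

theorem bil_smul_right (k : F) (w x : F × F) : bil w (k • x) = k * bil w x := by
  simp only [bil, Prod.smul_fst, Prod.smul_snd, smul_eq_mul]; ring

theorem bil_add_right (z w x : F × F) : bil z (w + x) = bil z w + bil z x := by
  simp only [bil, Prod.fst_add, Prod.snd_add]; ring

theorem bil_comm (w x : F × F) : bil w x = bil x w := by
  simp only [bil]; ring

theorem qf_add (p w x : F × F) :
    qf p (w + x) = qf p w + qf p x + bil w x + 2 * (p.2 * w.1 * x.1 + p.1 * w.2 * x.2) := by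
  simp only [qf, bil, Prod.fst_add, Prod.snd_add]; ring

theorem ne_zero_or {w : F × F} (hw : w ≠ 0) : w.1 ≠ 0 ∨ w.2 ≠ 0 := by
  by_contra! h
  exact hw (Prod.ext h.1 h.2)

/-! ### Quadratic forms in characteristic two -/

section CharTwo

variable [CharP F 2]

theorem two_eq_zero' : (2 : F) = 0 := CharTwo.two_eq_zero

theorem bil_self (w : F × F) : bil w w = 0 := by
  simp only [bil]; grind

theorem bil_act (g : SL2 F) (w x : F × F) : bil (act g w) (act g x) = bil w x := by
  have := det_entries g
  simp only [bil, act]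
  grind

theorem exists_smul_of_bil_eq_zero {w x : F × F} (hw : w ≠ 0) (h : bil w x = 0) :
    ∃ k : F, x = k • w := by
  simp only [bil] at h
  rcases ne_zero_or hw with h1 | h1
  · refine ⟨x.1 / w.1, ?_⟩
    ext <;> simp only [Prod.smul_fst, Prod.smul_snd, smul_eq_mul] <;> grind
  · refine ⟨x.2 / w.2, ?_⟩
    ext <;> simp only [Prod.smul_fst, Prod.smul_snd, smul_eq_mul] <;> grind

theorem exists_bil_eq_one {w : F × F} (hw : w ≠ 0) : ∃ x : F × F, bil w x = 1 := by
  rcases ne_zero_or hw with h1 | h1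
  · exact ⟨(0, 1 / w.1), by simp only [bil]; grind⟩
  · exact ⟨(1 / w.2, 0), by simp only [bil]; grind⟩

/-- The polar form of every `qf p` is `bil`. -/
theorem qf_add' (p w x : F × F) : qf p (w + x) = qf p w + qf p x + bil w x := by
  rw [qf_add, two_eq_zero', zero_mul, add_zero]

theorem qf_comb (p : F × F) {w x : F × F} (h : bil w x = 1) (α β : F) :
    qf p (α • w + β • x) = α ^ 2 * qf p w + α * β + β ^ 2 * qf p x := by
  rw [qf_add', qf_smul, qf_smul, bil_smul_left, bil_smul_right, h]; ring

theorem eq_comb {w x : F × F} (h : bil w x = 1) (v : F × F) :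
    v = bil v x • w + bil w v • x := by
  simp only [bil] at *
  ext <;> simp only [Prod.fst_add, Prod.snd_add, Prod.smul_fst, Prod.smul_snd, smul_eq_mul] <;>
    grind

/-- A form is determined by its values on a basis, the polar form being fixed. -/
theorem eq_of_qf_eq {p p' w x : F × F} (h : bil w x ≠ 0) (hw : qf p w = qf p' w)
    (hx : qf p x = qf p' x) : p = p' := by
  simp only [qf, bil] at *
  -- the difference of the two forms is the square of a linear form
  have e1 : (p.2 + p'.2) * w.1 ^ 2 = (p.1 + p'.1) * w.2 ^ 2 := by grind
  have e2 : (p.2 + p'.2) * x.1 ^ 2 = (p.1 + p'.1) * x.2 ^ 2 := by grind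
  have h3 : (p.2 + p'.2) * (w.1 * x.2 + w.2 * x.1) ^ 2 = 0 := by grind
  have h4 : (p.1 + p'.1) * (w.1 * x.2 + w.2 * x.1) ^ 2 = 0 := by grind
  have h5 := (mul_eq_zero.1 h3).resolve_right (pow_ne_zero 2 h)
  have h6 := (mul_eq_zero.1 h4).resolve_right (pow_ne_zero 2 h)
  ext <;> grind

/-! ### Tori -/

/-- The torus attached to the form `qf p`, `p = (y, z)`: the matrices of determinant `1` of the shape
`(a, y s; z s, a + s)`, where `s` is their trace. These are the elements of norm `1` of the quadratic
algebra of the form; the torus is split or anisotropic according to whether the form has a nonzero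
zero. -/
def tor (p : F × F) : Subgroup (SL2 F) where
  carrier := {g | g.1 0 1 = p.1 * tr g ∧ g.1 1 0 = p.2 * tr g}
  one_mem' := by
    have := one_entries (F := F)
    simp only [Set.mem_ofPred_eq, tr]; grind
  mul_mem' := by
    intro g h hg hh
    have := mul_entries g h
    simp only [Set.mem_ofPred_eq, tr] at *; grind
  inv_mem' := by
    intro g hg
    have := inv_entries g
    simp only [Set.mem_ofPred_eq, tr] at *; grind

theorem mem_tor {p : F × F} {g : SL2 F} :
    g ∈ tor p ↔ g.1 0 1 = p.1 * tr g ∧ g.1 1 0 = p.2 * tr g := Iff.rfl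

/-- Tori contain no nontrivial transvections. -/
theorem eq_one_of_mem_tor {p : F × F} {g : SL2 F} (hg : g ∈ tor p) (h : tr g = 0) : g = 1 := by
  have h1 := one_entries (F := F)
  have hd := det_entries g
  rw [mem_tor] at hg
  rw [h] at hg
  simp only [tr] at h
  have h2 : (g.1 0 0 + 1) ^ 2 = 0 := by grind
  have h3 : g.1 0 0 + 1 = 0 := pow_eq_zero_iff (two_ne_zero) |>.1 h2
  apply ext_entries <;> grind

theorem tor_unique {p p' : F × F} {g : SL2 F} (hg : g ∈ tor p) (hg' : g ∈ tor p') (h1 : g ≠ 1) :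
    p = p' := by
  have ht : tr g ≠ 0 := fun h => h1 (eq_one_of_mem_tor hg h)
  rw [mem_tor] at hg hg'
  ext
  · exact mul_right_cancel₀ ht (hg.1.symm.trans hg'.1)
  · exact mul_right_cancel₀ ht (hg.2.symm.trans hg'.2)

theorem exists_mem_tor {g : SL2 F} (h : tr g ≠ 0) : ∃ p, g ∈ tor p :=
  ⟨(g.1 0 1 / tr g, g.1 1 0 / tr g), by rw [mem_tor]; constructor <;> field_simp⟩

theorem qf_act_of_mem_tor {p : F × F} {g : SL2 F} (hg : g ∈ tor p) (w : F × F) :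
    qf p (act g w) = qf p w := by
  have hd := det_entries g
  rw [mem_tor] at hg
  simp only [qf, act, tr] at *
  grind

/-- The parameters of the form `qf p ∘ act g` (see `qf_conjp`). -/
def conjp (p : F × F) (g : SL2 F) : F × F :=
  (qf p (g.1 0 1, g.1 1 1), qf p (g.1 0 0, g.1 1 0))

theorem qf_conjp (p : F × F) (g : SL2 F) (w : F × F) : qf (conjp p g) w = qf p (act g w) := by
  have hd := det_entries g
  simp only [conjp, qf, act]
  grind

theorem conj_mem_tor {p : F × F} {g h : SL2 F} (hh : h ∈ tor (conjp p g)) :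
    g * h * g⁻¹ ∈ tor p := by
  have hd := det_entries g
  have h1 := mul_entries g h
  have h2 := mul_entries (g * h) g⁻¹
  have h3 := inv_entries g
  rw [mem_tor] at *
  simp only [conjp, qf, tr] at *
  constructor <;> grind

theorem tor_conjp_le {p : F × F} {g : SL2 F} {H : Subgroup (SL2 F)} (hH : tor p ≤ H) (hg : g ∈ H) :
    tor (conjp p g) ≤ H := by
  intro h hh
  have := H.mul_mem (H.mul_mem (H.inv_mem hg) (hH (conj_mem_tor hh))) hg
  simpa [mul_assoc] using this

/-- The torus of a form is transitive on each set of vectors with a given nonzero value. -/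
theorem tor_trans {p w x : F × F} (h : qf p w = qf p x) (hx : qf p x ≠ 0) :
    ∃ t ∈ tor p, act t w = x := by
  -- the equation `t w = x` determines `t`: its trace is `s` and its top left entry is `a`
  set s := bil w x / qf p x with hs
  set a := (x.1 * (p.2 * w.1 + w.2) + x.2 * (p.1 * w.2)) / qf p x with ha
  have h1 : s * qf p x = bil w x := by rw [hs]; field_simp
  have h2 : a * qf p x = x.1 * (p.2 * w.1 + w.2) + x.2 * (p.1 * w.2) := by rw [ha]; field_simp
  have h3 : a * (a + s) - (p.1 * s) * (p.2 * s) = 1 := by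
    have : (a * (a + s) - (p.1 * s) * (p.2 * s) - 1) * qf p x ^ 2 = 0 := by
      have : (a * qf p x) * (a * qf p x + s * qf p x)
        - (p.1 * (s * qf p x)) * (p.2 * (s * qf p x)) - (qf p w) * qf p x = 0 := by
        rw [h1, h2]
        simp only [qf, bil]
        grind
      rw [h] at this
      linear_combination this
    have := (mul_eq_zero.1 this).resolve_right (pow_ne_zero 2 hx)
    linear_combination this
  obtain ⟨e1, e2, e3, e4⟩ := mkSL_entries _ _ _ _ h3
  refine ⟨mkSL _ _ _ _ h3, ?_, ?_⟩
  · rw [mem_tor]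
    simp only [tr]
    grind
  · simp only [act, e1, e2, e3, e4]
    ext
    · apply mul_right_cancel₀ hx
      have : (a * qf p x) * w.1 + p.1 * (s * qf p x) * w.2 = x.1 * qf p w := by
        rw [h1, h2]
        simp only [qf, bil]; grind
      rw [h] at this
      linear_combination this
    · apply mul_right_cancel₀ hx
      have : p.2 * (s * qf p x) * w.1 + (a * qf p x + s * qf p x) * w.2 = x.2 * qf p w := by
        rw [h1, h2]
        simp only [qf, bil]; grind
      rw [h] at this
      linear_combination this

/-- The torus of a form realises every nonzero eigenvalue on each zero of the form. -/
theorem tor_eigen {p w : F × F} (hw : w ≠ 0) (h : qf p w = 0) {μ : F} (hμ : μ ≠ 0) :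
    ∃ t ∈ tor p, act t w = μ • w := by
  -- with `p = (y, z)` and `N = (0, y; z, 1)`, the vector `w` satisfies `N w = ν w`, and the required
  -- element is `(μ + s ν) + s N`, where `s = μ + μ⁻¹`
  obtain ⟨ν, hν⟩ : ∃ ν : F, (p.1 * w.2, p.2 * w.1 + w.2) = ν • w := by
    apply exists_smul_of_bil_eq_zero hw
    simp only [qf, bil] at *
    grind
  have n1 : p.1 * w.2 = ν * w.1 := congrArg Prod.fst hν
  have n2 : p.2 * w.1 + w.2 = ν * w.2 := congrArg Prod.snd hν
  have hq : ν ^ 2 + ν + p.1 * p.2 = 0 := by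
    rcases ne_zero_or hw with h1 | h1
    · apply mul_right_cancel₀ h1; grind
    · apply mul_right_cancel₀ h1; grind
  set s := μ + μ⁻¹ with hs
  have hm : μ * μ⁻¹ = 1 := mul_inv_cancel₀ hμ
  have h3 : (μ + s * ν) * (μ + s * ν + s) - (p.1 * s) * (p.2 * s) = 1 := by grind
  obtain ⟨e1, e2, e3, e4⟩ := mkSL_entries _ _ _ _ h3
  refine ⟨mkSL _ _ _ _ h3, ?_, ?_⟩
  · rw [mem_tor]
    simp only [tr]
    grind
  · simp only [act, e1, e2, e3, e4]
    ext <;> simp only [Prod.smul_fst, Prod.smul_snd, smul_eq_mul] <;> grind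

/-! ### Transvections -/

/-- The transvection `x ↦ x + bil w x • w`. -/
def tau (w : F × F) : SL2 F :=
  mkSL (1 + w.1 * w.2) (w.1 ^ 2) (w.2 ^ 2) (1 + w.1 * w.2) (by grind)

theorem tau_entries (w : F × F) : (tau w).1 0 0 = 1 + w.1 * w.2 ∧ (tau w).1 0 1 = w.1 ^ 2 ∧
    (tau w).1 1 0 = w.2 ^ 2 ∧ (tau w).1 1 1 = 1 + w.1 * w.2 := mkSL_entries _ _ _ _ _

theorem act_tau (w x : F × F) : act (tau w) x = x + bil w x • w := by
  have := tau_entries w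
  simp only [act]
  ext <;> simp only [Prod.smul_fst, Prod.smul_snd, smul_eq_mul, Prod.fst_add, Prod.snd_add, bil] <;>
    grind

theorem tau_conj (g : SL2 F) (w : F × F) : g * tau w * g⁻¹ = tau (act g w) := by
  have hd := det_entries g
  have h1 := mul_entries g (tau w)
  have h2 := mul_entries (g * tau w) g⁻¹
  have h3 := inv_entries g
  have h4 := tau_entries w
  have h5 := tau_entries (act g w)
  simp only [act] at h5
  simp only [act]
  apply ext_entries <;> grind

theorem tau_zero : tau (0 : F × F) = 1 := by
  have h1 := tau_entries (0 : F × F)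
  have := one_entries (F := F)
  simp only [Prod.fst_zero, Prod.snd_zero] at h1
  apply ext_entries <;> grind

theorem tau_ne_one {w : F × F} (hw : w ≠ 0) : tau w ≠ 1 := by
  intro h
  have h1 := tau_entries w
  have := one_entries (F := F)
  rw [h] at h1
  rcases ne_zero_or hw with h2 | h2
  · exact pow_ne_zero 2 h2 (by grind)
  · exact pow_ne_zero 2 h2 (by grind)

theorem tr_tau (w : F × F) : tr (tau w) = 0 := by
  have h1 := tau_entries w
  simp only [tr]; grind

theorem tr_tau_mul (w x : F × F) : tr (tau w * tau x) = bil w x ^ 2 := by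
  have h1 := tau_entries w
  have h2 := tau_entries x
  have h3 := mul_entries (tau w) (tau x)
  simp only [tr, bil]; grind

theorem tau_conj_mem {H : Subgroup (SL2 F)} {w : F × F} {g : SL2 F} (hw : tau w ∈ H) (hg : g ∈ H) :
    tau (act g w) ∈ H := by
  rw [← tau_conj]
  exact H.mul_mem (H.mul_mem hg hw) (H.inv_mem hg)

/-- A matrix of determinant `1` with eigenvalue `1` has trace `2 = 0`. -/
theorem tr_eq_zero_of_fix {g : SL2 F} {w : F × F} (hw : w ≠ 0) (h : act g w = w) : tr g = 0 := by
  have hd := det_entries g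
  have h1 := congrArg Prod.fst h
  have h2 := congrArg Prod.snd h
  simp only [act] at h1 h2
  simp only [tr]
  rcases ne_zero_or hw with h3 | h3
  · apply mul_right_cancel₀ h3; grind
  · apply mul_right_cancel₀ h3; grind

/-- A nontrivial element of a torus preserves the line of `w` exactly when `w` is a zero of the
form. -/
theorem bil_act_tor {p : F × F} {g : SL2 F} (hg : g ∈ tor p) (w : F × F) :
    bil w (act g w) = tr g * qf p w := by
  rw [mem_tor] at hg
  simp only [tr, bil, act, qf] at *
  grind

theorem tau_smul_mem {H : Subgroup (SL2 F)} {p w : F × F} (hp : tor p ≤ H) (hw : w ≠ 0)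
    (h : qf p w = 0) (ht : tau w ∈ H) (k : F) : tau (k • w) ∈ H := by
  by_cases hk : k = 0
  · rw [hk, zero_smul, tau_zero]; exact H.one_mem
  · obtain ⟨t, ht1, ht2⟩ := tor_eigen hw h hk
    rw [← ht2]
    exact tau_conj_mem ht (hp ht1)

/-- The nonzero zeros of a form come in pairs of distinct lines. -/
theorem exists_second_zero {p w : F × F} (hw : w ≠ 0) (h : qf p w = 0) :
    ∃ x : F × F, bil w x = 1 ∧ qf p x = 0 := by
  obtain ⟨x, hx⟩ := exists_bil_eq_one hw
  refine ⟨x + qf p x • w, ?_, ?_⟩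
  · rw [bil_add_right, bil_smul_right, hx, bil_self, mul_zero, add_zero]
  · rw [qf_add', qf_smul, h, bil_smul_right, bil_comm x w, hx]
    grind

/-- Two distinct lines are the zero lines of some form. -/
theorem exists_form {w x : F × F} (h : bil w x ≠ 0) : ∃ p : F × F, qf p w = 0 ∧ qf p x = 0 := by
  refine ⟨(w.1 * x.1 / bil w x, w.2 * x.2 / bil w x), ?_, ?_⟩
  · simp only [qf]
    field_simp
    simp only [bil]
    grind
  · simp only [qf]
    field_simp
    simp only [bil]
    grind

end CharTwo

/-! ### Subgroups containing two tori -/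

section Finite

variable [CharP F 2] [Finite F]

theorem exists_sq (a : F) : ∃ r : F, r ^ 2 = a := by
  obtain ⟨r, hr⟩ := FiniteField.isSquare_of_char_two (ringChar.eq F 2) a
  exact ⟨r, by rw [hr, sq]⟩

/-- Over a finite field of characteristic `2`, the matrices of trace `0` are the transvections. -/
theorem exists_eq_tau {g : SL2 F} (h : tr g = 0) : ∃ w, g = tau w := by
  obtain ⟨u, hu⟩ := exists_sq (g.1 0 1)
  obtain ⟨v, hv⟩ := exists_sq (g.1 1 0)
  refine ⟨(u, v), ?_⟩
  have hd := det_entries g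
  have h1 := tau_entries (u, v)
  simp only [tr] at h
  have h2 : (g.1 0 0 + 1 + u * v) ^ 2 = 0 := by grind
  have h3 := pow_eq_zero_iff (two_ne_zero) |>.1 h2
  apply ext_entries <;> grind

theorem eq_tau_of_fix {g : SL2 F} {w : F × F} (hw : w ≠ 0) (h : act g w = w) :
    ∃ k : F, g = tau (k • w) := by
  obtain ⟨x, rfl⟩ := exists_eq_tau (tr_eq_zero_of_fix hw h)
  rw [act_tau, add_eq_left, smul_eq_zero] at h
  rcases h with h | h
  · rw [bil_comm] at h
    obtain ⟨k, rfl⟩ := exists_smul_of_bil_eq_zero hw h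
    exact ⟨k, rfl⟩
  · exact ⟨0, by rw [h, zero_smul]⟩

/-- Tori are nontrivial when `|F| > 2`. For `|F| = 2` a split torus is trivial. -/
theorem exists_mem_tor_ne_one (hF : ∃ l : F, l ≠ 0 ∧ l ≠ 1) (p : F × F) :
    ∃ t ∈ tor p, t ≠ 1 := by
  -- `a ^ 2 + a + y z` is the norm of `(a, y; z, a + 1)`; scale this matrix to have norm `1`
  obtain ⟨a, ha⟩ : ∃ a : F, a ^ 2 + a + p.1 * p.2 ≠ 0 := by
    obtain ⟨l, h0, h1⟩ := hF
    by_cases h : p.1 * p.2 = 0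
    · refine ⟨l, ?_⟩
      rw [h]
      intro h2
      have : l * (l + 1) = 0 := by linear_combination h2
      rcases mul_eq_zero.1 this with h3 | h3 <;> grind
    · exact ⟨0, by simpa using h⟩
  obtain ⟨s, hs⟩ := exists_sq (a ^ 2 + a + p.1 * p.2)⁻¹
  have hs1 : s ^ 2 * (a ^ 2 + a + p.1 * p.2) = 1 := by rw [hs, inv_mul_cancel₀ ha]
  have hs0 : s ≠ 0 := by rintro rfl; simp at hs1
  have h3 : (s * a) * (s * a + s) - (p.1 * s) * (p.2 * s) = 1 := by grind
  obtain ⟨e1, e2, e3, e4⟩ := mkSL_entries _ _ _ _ h3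
  refine ⟨mkSL _ _ _ _ h3, ?_, ?_⟩
  · rw [mem_tor]
    simp only [tr]
    grind
  · intro h
    have := one_entries (F := F)
    rw [h] at e1 e4
    grind

/-- Two distinct tori fixing the line of `w` generate all transvections along `w`: elements with the
same eigenvalue `l ≠ 1` on `w` differ by a nontrivial transvection, and conjugating by one torus
gives the others. -/
theorem tau_mem_of_common_zero (hF : ∃ l : F, l ≠ 0 ∧ l ≠ 1) {H : Subgroup (SL2 F)} {p p' w : F × F}
    (hp : tor p ≤ H) (hp' : tor p' ≤ H) (hne : p ≠ p') (hw : w ≠ 0) (h : qf p w = 0)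
    (h' : qf p' w = 0) (k : F) : tau (k • w) ∈ H := by
  obtain ⟨l, hl0, hl1⟩ := hF
  obtain ⟨t, ht1, ht2⟩ := tor_eigen hw h hl0
  obtain ⟨s, hs1, hs2⟩ := tor_eigen hw h' hl0
  have hfix : act (t⁻¹ * s) w = w := by rw [act_mul, hs2, ← ht2, act_inv_act]
  obtain ⟨m, hm⟩ := eq_tau_of_fix hw hfix
  have hmem : tau (m • w) ∈ H := by
    rw [← hm]; exact H.mul_mem (H.inv_mem (hp ht1)) (hp' hs1)
  have hm0 : m ≠ 0 := by
    rintro rfl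
    rw [zero_smul, tau_zero, inv_mul_eq_one] at hm
    subst hm
    refine hne (tor_unique ht1 hs1 ?_)
    rintro rfl
    rw [act_one] at ht2
    apply hl1
    have : (l - 1) • w = 0 := by rw [sub_smul, ← ht2, one_smul, sub_self]
    exact sub_eq_zero.1 ((smul_eq_zero.1 this).resolve_right hw)
  have := tau_smul_mem hp (smul_ne_zero hm0 hw) (by rw [qf_smul, h, mul_zero]) hmem (k / m)
  rwa [smul_smul, div_mul_cancel₀ k hm0] at this

/-- The transvections along two distinct lines generate `SL₂(F)`. -/
theorem eq_top_of_tau {H : Subgroup (SL2 F)} {w x : F × F} (hwx : bil w x ≠ 0)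
    (hw : ∀ k : F, tau (k • w) ∈ H) (hx : ∀ k : F, tau (k • x) ∈ H) : H = ⊤ := by
  -- all transvections lie in `H`
  have hall : ∀ v : F × F, tau v ∈ H := by
    intro v
    obtain ⟨a, b, rfl⟩ : ∃ a b : F, v = a • w + b • x := by
      refine ⟨bil v x / bil w x, bil w v / bil w x, ?_⟩
      have h1 : bil w ((bil w x)⁻¹ • x) = 1 := by
        rw [bil_smul_right, inv_mul_cancel₀ hwx]
      have h2 := eq_comb h1 v
      rw [bil_smul_right, smul_smul] at h2
      rw [div_eq_mul_inv, div_eq_mul_inv, mul_comm (bil v x)]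
      exact h2
    by_cases ha : a = 0
    · rw [ha, zero_smul, zero_add]; exact hx b
    · obtain ⟨m, hm⟩ := exists_sq (b / (a * bil w x))
      have h1 := tau_conj_mem (hw a) (hx m)
      rw [act_tau, bil_smul_left, bil_smul_right, smul_smul] at h1
      have h2 : m * (a * bil x w) * m = b := by
        rw [bil_comm x w]
        have : m * (a * bil w x) * m = m ^ 2 * (a * bil w x) := by ring
        rw [this, hm]; field_simp
      rwa [h2] at h1
  rw [eq_top_iff]
  intro g _
  by_cases h0 : tr g = 0
  · obtain ⟨v, rfl⟩ := exists_eq_tau h0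
    exact hall v
  · obtain ⟨v, hv⟩ : ∃ v, bil v (act g v) ≠ 0 := by
      by_contra! h
      have h1 := h (1, 0)
      have h2 := h (0, 1)
      have h3 := h (1, 1)
      simp only [bil, act, tr] at *
      grind
    have hv0 : v ≠ 0 := by
      rintro rfl
      apply hv; simp [bil]
    obtain ⟨k, hk⟩ := exists_sq (bil v (act g v))⁻¹
    -- the transvection along `v + g v` moves `v` to `g v`
    have h1 : act (tau (k • (v + act g v))) v = act g v := by
      rw [act_tau, bil_smul_left, smul_smul]
      have : bil (v + act g v) v = bil v (act g v) := by
        simp only [bil, Prod.fst_add, Prod.snd_add]; grind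
      rw [this, mul_right_comm, ← sq, hk, inv_mul_cancel₀ hv, one_smul]
      ext <;> simp only [Prod.fst_add, Prod.snd_add] <;> grind
    have h2 : act ((tau (k • (v + act g v)))⁻¹ * g) v = v := by
      rw [act_mul]
      nth_rw 2 [← h1]
      rw [act_inv_act]
    obtain ⟨m, hm⟩ := eq_tau_of_fix hv0 h2
    rw [inv_mul_eq_iff_eq_mul] at hm
    rw [hm]
    exact H.mul_mem (hall _) (hall _)

/-- A proper subgroup containing all transvections along `w` fixes the line of `w`. -/
theorem fixes_of_tau {H : Subgroup (SL2 F)} (hH : H ≠ ⊤) {w : F × F}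
    (hw : ∀ k : F, tau (k • w) ∈ H) {g : SL2 F} (hg : g ∈ H) : bil w (act g w) = 0 := by
  by_contra h
  refine hH (eq_top_of_tau h hw fun k => ?_)
  rw [← act_smul]
  exact tau_conj_mem (hw k) hg

/-- A subgroup containing all transvections along `w` and a torus fixing the line of `w` contains the
whole stabilizer of that line. -/
theorem mem_of_fixes {H : Subgroup (SL2 F)} {p w : F × F} (hp : tor p ≤ H) (hw0 : w ≠ 0)
    (hq : qf p w = 0) (hw : ∀ k : F, tau (k • w) ∈ H) {g : SL2 F} (hg : bil w (act g w) = 0) :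
    g ∈ H := by
  obtain ⟨μ, hμ⟩ := exists_smul_of_bil_eq_zero hw0 hg
  have hμ0 : μ ≠ 0 := by
    rintro rfl
    rw [zero_smul] at hμ
    exact act_ne_zero g hw0 hμ
  obtain ⟨t, ht, ht2⟩ := tor_eigen hw0 hq hμ0
  have : act (t⁻¹ * g) w = w := by rw [act_mul, hμ, ← ht2, act_inv_act]
  obtain ⟨k, hk⟩ := eq_tau_of_fix hw0 this
  rw [inv_mul_eq_iff_eq_mul] at hk
  rw [hk]
  exact H.mul_mem (hp ht) (hw k)

/-- A torus moves any vector off the zeros of its form to any line off the zeros, and the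
ratio of the values determines the scaling factor. -/
theorem exists_tor_conj {p w x : F × F} (hw : qf p w ≠ 0) (hx : qf p x ≠ 0) :
    ∃ c : F, c ^ 2 = qf p w / qf p x ∧ c ≠ 0 ∧ ∃ t ∈ tor p, act t w = c • x := by
  obtain ⟨c, hc⟩ := exists_sq (qf p w / qf p x)
  have hc0 : c ≠ 0 := by
    rintro rfl
    have := div_ne_zero hw hx
    rw [← hc] at this
    simp at this
  refine ⟨c, hc, hc0, tor_trans ?_ ?_⟩
  · rw [qf_smul, hc]; field_simp
  · rw [qf_smul]; exact mul_ne_zero (pow_ne_zero 2 hc0) hx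

/-- If a proper subgroup contains two tori whose forms have no common nonzero zero, then `qf p'` has no
nonzero zero. If it had one, it would have a second one on another line. An element of
`tor p` maps the first line to the second, so conjugating `tor p'` by it gives another torus
fixing the first line; the subgroup then has to fix that line, but the conjugating element moves
it. -/
theorem no_zero_of_no_common_zero (hF : ∃ l : F, l ≠ 0 ∧ l ≠ 1) {H : Subgroup (SL2 F)} (hH : H ≠ ⊤)
    {p p' : F × F} (hp : tor p ≤ H) (hp' : tor p' ≤ H)
    (hno : ∀ w : F × F, w ≠ 0 → qf p' w = 0 → qf p w ≠ 0) (w : F × F) (hw : w ≠ 0) :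
    qf p' w ≠ 0 := by
  intro h
  obtain ⟨x, hwx, hx⟩ := exists_second_zero hw h
  have hx0 : x ≠ 0 := by rintro rfl; simp [bil] at hwx
  obtain ⟨c, -, hc0, t, ht, htw⟩ := exists_tor_conj (hno w hw h) (hno x hx0 hx)
  have hq3 : qf (conjp p' t) w = 0 := by rw [qf_conjp, htw, qf_smul, hx, mul_zero]
  have hne : p' ≠ conjp p' t := by
    intro he
    have h1 : qf p' (act t x) = 0 := by rw [← qf_conjp, ← he, hx]
    rw [eq_comb hwx (act t x), qf_comb p' hwx, h, hx] at h1
    have h2 := bil_act t w x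
    rw [htw, hwx, bil_smul_left] at h2
    rw [bil_comm (act t x) x] at h1
    have h3 : bil w (act t x) = 0 := by
      have : bil x (act t x) ≠ 0 := by rintro h; rw [h] at h2; simp at h2
      have h4 : bil x (act t x) * bil w (act t x) = 0 := by linear_combination h1
      exact (mul_eq_zero.1 h4).resolve_left this
    have h4 : tr t * bil w x = bil (act t w) x + bil w (act t x) := by
      simp only [tr, bil, act]; grind
    rw [htw, bil_smul_left, bil_self, h3, hwx] at h4
    have h5 : t = 1 := eq_one_of_mem_tor ht (by linear_combination h4)
    rw [h5, act_one] at htw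
    rw [htw, bil_smul_left, bil_self, mul_zero] at hwx
    exact zero_ne_one hwx
  have htau := tau_mem_of_common_zero hF hp' (tor_conjp_le hp' (hp ht)) hne hw h hq3
  have := fixes_of_tau hH htau (hp ht)
  rw [htw, bil_smul_right, hwx, mul_one] at this
  exact hc0 this

/-- Two forms agree on some nonzero vector, because their difference is the square of a linear
form. -/
theorem exists_bil_line {p p' : F × F} (hne : p ≠ p') : ∃ w : F × F, w ≠ 0 ∧ qf p w = qf p' w := by
  obtain ⟨u, hu⟩ := exists_sq (p.1 + p'.1)
  obtain ⟨v, hv⟩ := exists_sq (p.2 + p'.2)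
  refine ⟨(u, v), ?_, ?_⟩
  · intro h
    apply hne
    have h1 : u = 0 := congrArg Prod.fst h
    have h2 : v = 0 := congrArg Prod.snd h
    ext <;> grind
  · simp only [qf]
    grind

/-- If a proper subgroup contains every torus that it meets nontrivially, then the forms of any two
distinct tori in it share a nonzero zero. Otherwise neither form has a nonzero zero. Choose a
vector `w` on which the forms agree and `x` off its line, so that they differ on `x`. Elements of the
two tori that move `x` to `w` and back, up to scalars, compose to an element with an eigenvalue
other than `1` on `x`. It lies in a torus whose form vanishes at `x`, which contradicts
`no_zero_of_no_common_zero`. -/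
theorem exists_common_zero (hF : ∃ l : F, l ≠ 0 ∧ l ≠ 1) {H : Subgroup (SL2 F)} (hH : H ≠ ⊤)
    (hc : ∀ p g, g ∈ tor p → g ≠ 1 → g ∈ H → tor p ≤ H)
    {p p' : F × F} (hp : tor p ≤ H) (hp' : tor p' ≤ H) (hne : p ≠ p') :
    ∃ w : F × F, w ≠ 0 ∧ qf p w = 0 ∧ qf p' w = 0 := by
  by_contra! hno
  have ha' := no_zero_of_no_common_zero hF hH hp hp' (fun w hw h h' => hno w hw h' h)
  have ha := no_zero_of_no_common_zero hF hH hp' hp (fun w hw h => hno w hw h)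
  obtain ⟨w, hw, hww⟩ := exists_bil_line hne
  obtain ⟨x, hwx⟩ := exists_bil_eq_one hw
  have hx0 : x ≠ 0 := by rintro rfl; simp [bil] at hwx
  have hxx : qf p x ≠ qf p' x := fun h => hne (eq_of_qf_eq (by rw [hwx]; exact one_ne_zero) hww h)
  obtain ⟨c, hc2, hc0, t, ht, htx⟩ := exists_tor_conj (ha x hx0) (ha w hw)
  obtain ⟨d, hd2, hd0, s, hs, hsw⟩ := exists_tor_conj (ha' w hw) (ha' x hx0)
  have hg : act (s * t) x = (c * d) • x := by rw [act_mul, htx, act_smul, hsw, smul_smul]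
  have hcd : (c * d) ^ 2 ≠ 1 := by
    rw [mul_pow, hc2, hd2, hww]
    have := ha' w hw
    have := ha' x hx0
    intro h
    apply hxx
    field_simp at h
    exact h
  have htr : tr (s * t) ≠ 0 := by
    intro h0
    obtain ⟨v, hv⟩ := exists_eq_tau h0
    rw [hv, act_tau] at hg
    have h1 := congrArg (bil w) hg
    have h2 := congrArg (bil x) hg
    rw [bil_add_right, bil_smul_right, bil_smul_right, hwx] at h1
    rw [bil_add_right, bil_smul_right, bil_smul_right, bil_self, bil_comm x v] at h2
    have h3 : bil v x = 0 := by
      have : bil v x ^ 2 = 0 := by linear_combination h2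
      exact pow_eq_zero_iff (two_ne_zero) |>.1 this
    rw [h3] at h1
    apply hcd
    have : c * d = 1 := by linear_combination -h1
    rw [this, one_pow]
  obtain ⟨r, hr⟩ := exists_mem_tor htr
  have hrx : qf r x = 0 := by
    have h1 := qf_act_of_mem_tor hr x
    rw [hg, qf_smul] at h1
    have h2 : ((c * d) ^ 2 - 1) * qf r x = 0 := by linear_combination h1
    exact (mul_eq_zero.1 h2).resolve_left (sub_ne_zero.2 hcd)
  have hrH : tor r ≤ H := by
    refine hc r _ hr ?_ (H.mul_mem (hp' hs) (hp ht))
    intro h1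
    rw [h1, act_one] at hg
    apply hcd
    have h2 := congrArg (bil w) hg
    rw [bil_smul_right, hwx] at h2
    rw [mul_one] at h2
    rw [← h2, one_pow]
  exact no_zero_of_no_common_zero hF hH hp hrH (fun v hv _ => ha v hv) x hx0 hrx

/-- Tori are cyclic: a root `l` of `X² + X + y z` in the algebraic closure defines the embedding
`g ↦ g₀₀ + tr g * l` of `tor p` into a field, as the eigenvalues of `g` are in this form. -/
theorem isCyclic_tor (p : F × F) : IsCyclic (tor p) := by
  obtain ⟨l, hl⟩ : ∃ l : AlgebraicClosure F,
      l ^ 2 + l + algebraMap F (AlgebraicClosure F) (p.1 * p.2) = 0 := by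
    have := IsAlgClosed.exists_root
      (Polynomial.X ^ 2 + Polynomial.X +
        Polynomial.C (algebraMap F (AlgebraicClosure F) (p.1 * p.2))) (by
          have : (Polynomial.X ^ 2 + Polynomial.X +
            Polynomial.C (algebraMap F (AlgebraicClosure F) (p.1 * p.2))).degree = 2 := by
            compute_degree!
          rw [this]; decide)
    obtain ⟨l, hl⟩ := this
    exact ⟨l, by simpa using hl⟩
  have h2 : (2 : AlgebraicClosure F) = 0 := by
    rw [← map_ofNat (algebraMap F (AlgebraicClosure F)) 2, two_eq_zero', map_zero]
  set A := algebraMap F (AlgebraicClosure F) with hA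
  have hn : ∀ g ∈ tor p,
      (A (g.1 0 0) + A (tr g) * l) * (A (g.1 0 0) + A (tr g) * l + A (tr g)) = 1 := by
    intro g hg
    have hd := congrArg A (det_entries g)
    rw [mem_tor] at hg
    obtain ⟨h3, h4⟩ := hg
    rw [h3, h4] at hd
    have h5 : g.1 1 1 = tr g + g.1 0 0 := by simp only [tr]; grind
    rw [h5] at hd
    simp only [map_sub, map_mul, map_one, map_add] at hd hl
    linear_combination hd + A (tr g) ^ 2 * hl + (A (g.1 0 0) * A (tr g) * l) * h2
  let f : tor p →* AlgebraicClosure F :=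
    { toFun := fun g => A (g.1.1 0 0) + A (tr g.1) * l
      map_one' := by
        have := one_entries (F := F)
        have h3 : tr (1 : SL2 F) = 0 := by simp only [tr]; grind
        simp only [OneMemClass.coe_one, h3, this.1, map_one, map_zero]
        ring
      map_mul' := by
        rintro ⟨g, hg⟩ ⟨h, hh⟩
        rw [mem_tor] at hg hh
        have h3 := mul_entries g h
        have h4 : (g * h).1 0 0 = g.1 0 0 * h.1 0 0 + p.1 * p.2 * (tr g * tr h) := by grind
        have h5 : tr (g * h) = g.1 0 0 * tr h + tr g * h.1 0 0 + tr g * tr h := by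
          simp only [tr] at *; grind
        simp only [MulMemClass.mk_mul_mk, h4, h5, map_add, map_mul]
        simp only [map_mul] at hl
        linear_combination (-A (tr g) * A (tr h)) * hl +
          (A (tr g) * A (tr h) * A p.1 * A p.2 + A (tr g) * A (tr h) * l) * h2 }
  refine isCyclic_of_injective_ringHom f ?_
  rw [injective_iff_map_eq_one]
  rintro ⟨g, hg⟩ h
  have h3 : A (g.1 0 0) + A (tr g) * l = 1 := h
  have h4 := hn g hg
  rw [h3, one_mul, add_eq_left, map_eq_zero] at h4
  exact Subtype.ext (eq_one_of_mem_tor hg h4)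

end Finite

/-! ### The lower bound -/

section Partition

variable [CharP F 2] [Finite F]

theorem eq_of_mem_partition {G : Type*} [Group G] {P : Finset (Subgroup G)}
    (hP : IsPartitionOf P) {H K : Subgroup G} (hH : H ∈ P) (hK : K ∈ P) {g : G} (h1 : g ≠ 1)
    (hgH : g ∈ H) (hgK : g ∈ K) : H = K := by
  by_contra hne
  have : g ∈ H ⊓ K := ⟨hgH, hgK⟩
  rw [hP.2 H hH K hK hne, Subgroup.mem_bot] at this
  exact h1 this

theorem exists_le_of_isCyclic {G : Type*} [Group G] {P : Finset (Subgroup G)}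
    (hP : IsPartitionOf P) (A : Subgroup G) [IsCyclic A] : ∃ H ∈ P, A ≤ H := by
  obtain ⟨g, hg⟩ := IsCyclic.exists_generator (α := A)
  obtain ⟨H, hH, hgH⟩ := hP.1.2 g
  refine ⟨H, hH, fun a ha => ?_⟩
  obtain ⟨n, hn⟩ := Subgroup.mem_zpowers_iff.1 (hg ⟨a, ha⟩)
  have : a = (g : G) ^ n := by rw [← SubgroupClass.coe_zpow, hn]
  rw [this]
  exact H.zpow_mem hgH n

/-- If the tori lie in subgroups `D q` with pairwise trivial intersections, then the `D q` do not
contain all transvections. -/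
theorem exists_tau_notMem (hF : ∃ l : F, l ≠ 0 ∧ l ≠ 1) (D : F × F → Subgroup (SL2 F))
    (hD : ∀ q, tor q ≤ D q) (hdisj : ∀ q r g, g ≠ 1 → g ∈ D q → g ∈ D r → q = r) :
    ∃ w : F × F, w ≠ 0 ∧ ∀ q, tau w ∉ D q := by
  by_contra! hE
  -- `tau w` normalizes the only torus in `D q`, so it preserves the form `qf q`
  have hone : ∀ q, ∀ w : F × F, w ≠ 0 → tau w ∈ D q → qf q w = 1 := by
    intro q w hw hwq
    have h1 : conjp q (tau w) = q := by
      obtain ⟨t, ht, ht1⟩ := exists_mem_tor_ne_one hF (conjp q (tau w))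
      exact hdisj _ _ t ht1 (hD _ ht) (tor_conjp_le (hD q) hwq ht)
    obtain ⟨x, hx⟩ := exists_bil_eq_one hw
    have h2 := qf_conjp q (tau w) x
    rw [h1, act_tau, hx, one_smul, qf_add', bil_comm x w, hx] at h2
    grind
  have hall : ∀ q, (∃ w : F × F, w ≠ 0 ∧ tau w ∈ D q) → ∀ x, qf q x = 1 → tau x ∈ D q := by
    rintro q ⟨w, hw, hwq⟩ x hx
    obtain ⟨t, ht, rfl⟩ := tor_trans ((hone q w hw hwq).trans hx.symm)
      (by rw [hx]; exact one_ne_zero)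
    exact tau_conj_mem hwq (hD q ht)
  -- two such forms agree on some `w`; a nonzero common value could be scaled to `1`, and then
  -- `D q` and `D q'` would share a transvection
  have hshare : ∀ q q', q ≠ q' → (∃ w : F × F, w ≠ 0 ∧ tau w ∈ D q) →
      (∃ w : F × F, w ≠ 0 ∧ tau w ∈ D q') →
      ∃ w : F × F, w ≠ 0 ∧ qf q w = 0 ∧ qf q' w = 0 := by
    intro q q' hne hq hq'
    obtain ⟨w, hw, hww⟩ := exists_bil_line hne
    refine ⟨w, hw, ?_, ?_⟩
    · by_contra h
      obtain ⟨k, hk⟩ := exists_sq (qf q w)⁻¹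
      have h1 : qf q (k • w) = 1 := by rw [qf_smul, hk, inv_mul_cancel₀ h]
      have h2 : qf q' (k • w) = 1 := by rw [qf_smul, ← hww, hk, inv_mul_cancel₀ h]
      have hk0 : k • w ≠ 0 := by intro h0; rw [h0] at h1; simp [qf] at h1
      exact hne (hdisj _ _ _ (tau_ne_one hk0)
        (hall q hq _ h1) (hall q' hq' _ h2))
    · by_contra h
      obtain ⟨k, hk⟩ := exists_sq (qf q' w)⁻¹
      have h1 : qf q' (k • w) = 1 := by rw [qf_smul, hk, inv_mul_cancel₀ h]
      have h2 : qf q (k • w) = 1 := by rw [qf_smul, hww, hk, inv_mul_cancel₀ h]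
      have hk0 : k • w ≠ 0 := by intro h0; rw [h0] at h1; simp [qf] at h1
      exact hne (hdisj _ _ _ (tau_ne_one hk0)
        (hall q hq _ h2) (hall q' hq' _ h1))
  -- a form `q₁` with zeros `a` and `b`
  obtain ⟨l, hl0, hl1⟩ := hF
  have he0 : ((1, 0) : F × F) ≠ 0 := by simp
  obtain ⟨q₁, hq₁⟩ := hE (1, 0) he0
  obtain ⟨q₂, hq₂⟩ := hE (l • (1, 0)) (smul_ne_zero hl0 he0)
  have hne : q₁ ≠ q₂ := by
    rintro rfl
    have h1 := hone _ _ he0 hq₁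
    have h2 := hone _ _ (smul_ne_zero hl0 he0) hq₂
    rw [qf_smul, h1] at h2
    apply hl1
    have h3 : (l + 1) ^ 2 = 0 := by grind
    have := pow_eq_zero_iff (two_ne_zero) |>.1 h3
    grind
  obtain ⟨a, ha, ha1, -⟩ := hshare q₁ q₂ hne ⟨_, he0, hq₁⟩ ⟨_, smul_ne_zero hl0 he0, hq₂⟩
  obtain ⟨b, hab, hb1⟩ := exists_second_zero ha ha1
  have hb : b ≠ 0 := by rintro rfl; simp [bil] at hab
  obtain ⟨q', hq'⟩ := hE b hb
  have hb' := hone _ _ hb hq'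
  -- the value at `a` of the form whose component contains the transvection along `k • a`
  have hkey : ∀ k : F, k ≠ 0 → ∃ m : F, k ^ 2 * m = 1 ∧ qf q' a + m + m ^ 2 = 0 := by
    intro k hk
    obtain ⟨r, hr⟩ := hE (k • a) (smul_ne_zero hk ha)
    have hra := hone _ _ (smul_ne_zero hk ha) hr
    rw [qf_smul] at hra
    have hra0 : qf r a ≠ 0 := by rintro h; rw [h, mul_zero] at hra; exact zero_ne_one hra
    have hr1 : r ≠ q₁ := by rintro rfl; exact hra0 ha1
    have hrb : qf r b = 0 := by
      obtain ⟨x, hx, hx1, hx2⟩ := hshare r q₁ hr1 ⟨_, smul_ne_zero hk ha, hr⟩ ⟨_, he0, hq₁⟩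
      rw [eq_comb hab x, qf_comb _ hab] at hx1 hx2
      have hxx := eq_comb hab x
      generalize bil x b = α at *
      generalize bil a x = β at *
      rw [ha1, hb1] at hx2
      have h3 : α * β = 0 := by linear_combination hx2
      rcases mul_eq_zero.1 h3 with rfl | rfl
      · have hβ : β ≠ 0 := by rintro rfl; apply hx; rw [hxx]; simp
        have h4 : β ^ 2 * qf r b = 0 := by linear_combination hx1
        exact (mul_eq_zero.1 h4).resolve_left (pow_ne_zero 2 hβ)
      · have hα : α ≠ 0 := by rintro rfl; apply hx; rw [hxx]; simp
        have h4 : α ^ 2 * qf r a = 0 := by linear_combination hx1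
        exact absurd ((mul_eq_zero.1 h4).resolve_left (pow_ne_zero 2 hα)) hra0
    have hr' : r ≠ q' := by rintro rfl; rw [hb'] at hrb; exact one_ne_zero hrb
    refine ⟨qf r a, hra, ?_⟩
    -- the zeros of `qf r` are `b` and another line; only the latter can be a zero of `qf q'`
    obtain ⟨x, hx, hx1, hx2⟩ := hshare r q' hr' ⟨_, smul_ne_zero hk ha, hr⟩ ⟨_, hb, hq'⟩
    rw [eq_comb hab x, qf_comb _ hab] at hx1 hx2
    have hxx := eq_comb hab x
    generalize bil x b = α at *
    generalize bil a x = β at *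
    rw [hrb] at hx1
    rw [hb'] at hx2
    have hα : α ≠ 0 := by
      rintro rfl
      have h4 : β ^ 2 = 0 := by linear_combination hx2
      have := pow_eq_zero_iff (two_ne_zero) |>.1 h4
      apply hx; rw [hxx, this]; simp
    have h5 : α * qf r a + β = 0 := by
      apply mul_left_cancel₀ hα
      linear_combination hx1
    apply mul_left_cancel₀ (pow_ne_zero 2 hα)
    grind
  -- `m = 1` shows that `qf q' a = 0`, and then `m = l⁻²` satisfies `m ^ 2 = m`
  obtain ⟨m, hm1, hm2⟩ := hkey 1 one_ne_zero
  obtain ⟨n, hn1, hn2⟩ := hkey l hl0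
  apply hl1
  grind

/-- The forms inject into the members of a partition, avoiding at least one member. In the proof, `C g`
is a member containing `g`, and `D p` is the member containing `tor p`. -/
theorem exists_injective_of_partition (hF : ∃ l : F, l ≠ 0 ∧ l ≠ 1) {P : Finset (Subgroup (SL2 F))}
    (hP : IsPartitionOf P) : ∃ f : F × F → Subgroup (SL2 F), Function.Injective f ∧
      (∀ p, f p ∈ P) ∧ ∃ H ∈ P, ∀ p, f p ≠ H := by
  choose C hCP hC using hP.1.2
  have hD : ∀ p : F × F, ∃ H ∈ P, tor p ≤ H := fun p => by
    have := isCyclic_tor p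
    exact exists_le_of_isCyclic hP (tor p)
  choose D hDP hD using hD
  have hDu : ∀ p, ∀ H ∈ P, ∀ g, g ∈ tor p → g ≠ 1 → g ∈ H → D p = H := fun p H hH g hg h1 hgH =>
    eq_of_mem_partition hP (hDP p) hH h1 (hD p hg) hgH
  have hDle : ∀ p, ∀ H ∈ P, tor p ≤ H → D p = H := fun p H hH hle => by
    obtain ⟨t, ht, ht1⟩ := exists_mem_tor_ne_one hF p
    exact hDu p H hH t ht ht1 (hle ht)
  have hc : ∀ H ∈ P, ∀ p g, g ∈ tor p → g ≠ 1 → g ∈ H → tor p ≤ H := fun H hH p g hg h1 hgH => by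
    rw [← hDu p H hH g hg h1 hgH]; exact hD p
  -- a component with two tori is the full stabilizer of a point
  have hB : ∀ p p', p ≠ p' → D p = D p' → ∃ w : F × F, w ≠ 0 ∧ qf p w = 0 ∧ qf p' w = 0 ∧
      ∀ g, g ∈ D p ↔ bil w (act g w) = 0 := by
    intro p p' hne he
    have hle' : tor p' ≤ D p := by rw [he]; exact hD p'
    obtain ⟨w, hw, h, h'⟩ := exists_common_zero hF (hP.1.1 _ (hDP p)) (hc _ (hDP p)) (hD p) hle' hne
    have htau := tau_mem_of_common_zero hF (hD p) hle' hne hw h h'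
    exact ⟨w, hw, h, h', fun g => ⟨fun hg => fixes_of_tau (hP.1.1 _ (hDP p)) htau hg,
      fun hg => mem_of_fixes (hD p) hw h htau hg⟩⟩
  by_cases hinj : Function.Injective D
  · obtain ⟨w, -, hwq⟩ := exists_tau_notMem hF D hD fun q r g h1 hgq hgr =>
      hinj (eq_of_mem_partition hP (hDP q) (hDP r) h1 hgq hgr)
    exact ⟨D, hinj, hDP, C (tau w), hCP _, fun p h => hwq p (h ▸ hC _)⟩
  · simp only [Function.Injective] at hinj
    push Not at hinj
    obtain ⟨p, p', he, hne⟩ := hinj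
    obtain ⟨w, hw, hpw, -, hH⟩ := hB p p' hne he
    obtain ⟨x₀, hx₀⟩ := exists_bil_eq_one hw
    set H := D p with hHdef
    have hHP : H ∈ P := hDP p
    have htorH : ∀ q, qf q w = 0 → D q = H := fun q hq => by
      apply hDle q H hHP
      intro t ht
      rw [hH, bil_act_tor ht, hq, mul_zero]
    -- a component other than `H` that contains a transvection not fixing `w` contains no torus
    have hnotor : ∀ K ∈ P, K ≠ H → ∀ q x, qf q w = 0 → qf q x = 0 → bil w x = 1 → tau x ∈ K →
        ∀ r, ¬ tor r ≤ K := by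
      intro K hK hKH q x hqw hqx hwx hxK r hr
      have hx : x ≠ 0 := by rintro rfl; simp [bil] at hwx
      by_cases hrw : qf r w = 0
      · exact hKH ((hDle r K hK hr).symm.trans (htorH r hrw))
      by_cases hrx : qf r x = 0
      · have htau := tau_smul_mem hr hx hrx hxK
        have hqK : tor q ≤ K := by
          intro t ht
          apply mem_of_fixes hr hx hrx htau
          rw [bil_act_tor ht, hqx, mul_zero]
        exact hKH ((hDle q K hK hqK).symm.trans (htorH q hqw))
      · obtain ⟨c, -, hc0, t, ht, htx⟩ := exists_tor_conj hrx hrw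
        have h1 : tau (c • w) ∈ K := by rw [← htx]; exact tau_conj_mem hxK (hr ht)
        have h2 : tau (c • w) ∈ H := by
          rw [hH, act_tau, bil_smul_left, bil_self, mul_zero, zero_smul, add_zero, bil_self]
        exact hKH (eq_of_mem_partition hP hK hHP (tau_ne_one (smul_ne_zero hc0 hw)) h1 h2)
    -- when `qf q w = 0`, `z q` is the second zero of `qf q`, normalized by `bil w (z q) = 1`
    set z : F × F → F × F := fun q => x₀ + qf q x₀ • w with hz
    have hwz : ∀ q, bil w (z q) = 1 := by
      intro q
      rw [hz, bil_add_right, bil_smul_right, hx₀, bil_self, mul_zero, add_zero]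
    have hqz : ∀ q, qf q w = 0 → qf q (z q) = 0 := by
      intro q hq
      rw [hz]
      simp only []
      rw [qf_add', qf_smul, hq, bil_smul_right, bil_comm x₀ w, hx₀]
      grind
    have hz0 : ∀ q, z q ≠ 0 := by
      intro q h
      have := hwz q
      rw [h] at this
      simp [bil] at this
    have hDH : ∀ q, qf q w ≠ 0 → D q ≠ H := by
      intro q hq h
      obtain ⟨t, ht, ht1⟩ := exists_mem_tor_ne_one hF q
      have h1 := (hH t).1 (h ▸ hD q ht)
      rw [bil_act_tor ht] at h1
      exact ht1 (eq_one_of_mem_tor ht ((mul_eq_zero.1 h1).resolve_right hq))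
    have hCH : ∀ q, C (tau (z q)) ≠ H := by
      intro q h
      have h1 := (hH (tau (z q))).1 (h ▸ hC _)
      rw [act_tau, bil_add_right, bil_smul_right, bil_self, bil_comm (z q) w, hwz] at h1
      simp at h1
    have hCD : ∀ q r, qf q w = 0 → C (tau (z q)) ≠ D r := by
      intro q r hq h
      exact hnotor _ (hCP _) (hCH q) q (z q) hq (hqz q hq) (hwz q) (hC _) r (h ▸ hD r)
    classical
    refine ⟨fun q => if qf q w = 0 then C (tau (z q)) else D q, ?_, ?_, H, hHP, ?_⟩
    · intro q q' hqq
      by_cases h : qf q w = 0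
      · by_cases h' : qf q' w = 0
        · simp only [h, h', if_true] at hqq
          -- the product of two transvections in distinct directions lies in a torus, and the member
          -- containing `tau (z q)` contains no torus
          have hmem : tau (z q) * tau (z q') ∈ C (tau (z q)) :=
            Subgroup.mul_mem _ (hC _) (hqq ▸ hC _)
          by_cases hb : bil (z q) (z q') = 0
          · have e1 : bil (z q) (z q') = qf q' x₀ + qf q x₀ := by
              rw [hz]
              simp only [bil] at hx₀
              simp only [bil, Prod.smul_fst, Prod.smul_snd, smul_eq_mul, Prod.fst_add, Prod.snd_add]
              grind
            rw [e1] at hb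
            exact eq_of_qf_eq (by rw [hx₀]; exact one_ne_zero) (h.trans h'.symm) (by grind)
          · exfalso
            have htr : tr (tau (z q) * tau (z q')) ≠ 0 := by
              rw [tr_tau_mul]; exact pow_ne_zero 2 hb
            obtain ⟨r, hr⟩ := exists_mem_tor htr
            refine hCD q r h (hDu r _ (hCP _) _ hr ?_ hmem).symm
            intro h1
            rw [h1] at htr
            apply htr
            have := one_entries (F := F)
            simp only [tr]; grind
        · simp only [h, h', if_true, if_false] at hqq
          exact absurd hqq (hCD q q' h)
      · by_cases h' : qf q' w = 0
        · simp only [h, h', if_true, if_false] at hqq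
          exact absurd hqq.symm (hCD q' q h')
        · simp only [h, h', if_false] at hqq
          by_contra hne'
          -- the common member would be the stabilizer of a line other than that of `w`, and the torus
          -- fixing both lines would lie in it and in `H`
          obtain ⟨v, hv, hqv, -, hK⟩ := hB q q' hne' hqq
          have hvw : bil v w ≠ 0 := by
            intro h0
            obtain ⟨k, rfl⟩ := exists_smul_of_bil_eq_zero hv h0
            apply h; rw [qf_smul, hqv, mul_zero]
          obtain ⟨r, hrv, hrw⟩ := exists_form hvw
          refine hDH q h ((hDle r _ (hDP q) fun t ht => ?_).symm.trans (htorH r hrw))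
          rw [hK, bil_act_tor ht, hrv, mul_zero]
    · intro q
      by_cases h : qf q w = 0
      · simp only [h, if_true]; exact hCP _
      · simp only [h, if_false]; exact hDP _
    · intro q
      by_cases h : qf q w = 0
      · simp only [h, if_true]; exact hCH q
      · simp only [h, if_false]; exact hDH q h

theorem card_lower_bound (hF : ∃ l : F, l ≠ 0 ∧ l ≠ 1) {P : Finset (Subgroup (SL2 F))}
    (hP : IsPartitionOf P) : Nat.card F ^ 2 + 1 ≤ P.card := by
  classical
  have := Fintype.ofFinite F
  obtain ⟨f, hf, hfP, H, hHP, hfH⟩ := exists_injective_of_partition hF hP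
  have h1 : insert H (Finset.univ.image f) ⊆ P := by
    intro K hK
    rw [Finset.mem_insert, Finset.mem_image] at hK
    rcases hK with rfl | ⟨q, -, rfl⟩
    · exact hHP
    · exact hfP q
  have h2 := Finset.card_le_card h1
  rw [Finset.card_insert_of_notMem (by simpa using hfH), Finset.card_image_of_injective _ hf,
    Finset.card_univ, Fintype.card_prod, ← Nat.card_eq_fintype_card, ← sq] at h2
  exact h2

end Partition

/-! ### A partition with `q² + 1` members -/

section Construction

variable [CharP F 2]

/-- The upper triangular matrices, which form the stabilizer of the line of `(1, 0)`. -/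
def borel : Subgroup (SL2 F) where
  carrier := {g | g.1 1 0 = 0}
  one_mem' := one_entries.2.2.1
  mul_mem' := by
    intro g h hg hh
    have := mul_entries g h
    simp only [Set.mem_ofPred_eq] at *; grind
  inv_mem' := by
    intro g hg
    have := inv_entries g
    simp only [Set.mem_ofPred_eq] at *; grind

theorem mem_borel {g : SL2 F} : g ∈ (borel : Subgroup (SL2 F)) ↔ g.1 1 0 = 0 := Iff.rfl

/-- The transvections along the line of `(r, 1)`, together with `1`, where `r ^ 2 = u`. -/
def unip (u : F) : Subgroup (SL2 F) where
  carrier := {g | tr g = 0 ∧ g.1 0 1 = u * g.1 1 0}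
  one_mem' := by
    have := one_entries (F := F)
    simp only [Set.mem_ofPred_eq, tr]; grind
  mul_mem' := by
    intro g h hg hh
    have := mul_entries g h
    simp only [Set.mem_ofPred_eq, tr] at *; grind
  inv_mem' := by
    intro g hg
    have := inv_entries g
    simp only [Set.mem_ofPred_eq, tr] at *; grind

theorem mem_unip {u : F} {g : SL2 F} : g ∈ unip u ↔ tr g = 0 ∧ g.1 0 1 = u * g.1 1 0 := Iff.rfl

theorem eq_one_of_mem_unip {u : F} {g : SL2 F} (hg : g ∈ unip u) (h : g.1 1 0 = 0) : g = 1 := by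
  rw [mem_unip, h, mul_zero] at hg
  exact eq_one_of_mem_tor (p := 0) ⟨by rw [hg.2, hg.1, mul_zero], by rw [h, hg.1, mul_zero]⟩ hg.1

/-- The members are `borel`, the tori not contained in it, and the subgroups `unip u`. -/
theorem exists_partition [Finite F] (hF : ∃ l : F, l ≠ 0 ∧ l ≠ 1) :
    ∃ P : Finset (Subgroup (SL2 F)), IsPartitionOf P ∧ P.card ≤ Nat.card F ^ 2 + 1 := by
  classical
  have := Fintype.ofFinite F
  let T : Finset (Subgroup (SL2 F)) :=
    ((Finset.univ : Finset F) ×ˢ (Finset.univ.erase (0 : F))).image tor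
  let U : Finset (Subgroup (SL2 F)) := Finset.univ.image unip
  have hmem : ∀ H, H ∈ insert borel (T ∪ U) ↔
      H = borel ∨ (∃ p : F × F, p.2 ≠ 0 ∧ H = tor p) ∨ ∃ u : F, H = unip u := by
    intro H
    simp only [T, U, Finset.mem_insert, Finset.mem_union, Finset.mem_image, Finset.mem_product,
      Finset.mem_univ, Finset.mem_erase, true_and, and_true, eq_comm]
  have hbt : ∀ p : F × F, p.2 ≠ 0 → ∀ g, g ∈ (borel : Subgroup (SL2 F)) → g ∈ tor p → g = 1 := by
    intro p hp g h1 h2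
    rw [mem_borel] at h1
    have h3 := h2.2
    rw [h1] at h3
    exact eq_one_of_mem_tor h2 ((mul_eq_zero.1 h3.symm).resolve_left hp)
  have hbu : ∀ u : F, ∀ g, g ∈ (borel : Subgroup (SL2 F)) → g ∈ unip u → g = 1 :=
    fun u g h1 h2 => eq_one_of_mem_unip h2 h1
  have htu : ∀ (p : F × F) (u : F), ∀ g, g ∈ tor p → g ∈ unip u → g = 1 :=
    fun p u g h1 h2 => eq_one_of_mem_tor h1 h2.1
  refine ⟨insert borel (T ∪ U), ⟨⟨?_, ?_⟩, ?_⟩, ?_⟩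
  · intro H hH hT
    rw [hmem] at hH
    rcases hH with rfl | ⟨p, -, rfl⟩ | ⟨u, rfl⟩
    · have h1 : tau (0, 1) ∈ (borel : Subgroup (SL2 F)) := hT ▸ Subgroup.mem_top _
      rw [mem_borel, (tau_entries _).2.2.1] at h1
      simp at h1
    · have h1 : tau (0, 1) ∈ tor p := hT ▸ Subgroup.mem_top _
      exact tau_ne_one (by simp) (eq_one_of_mem_tor h1 (tr_tau _))
    · obtain ⟨t, ht, ht1⟩ := exists_mem_tor_ne_one hF 0
      have h1 : t ∈ unip u := hT ▸ Subgroup.mem_top _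
      exact ht1 (htu _ _ _ ht h1)
  · intro g
    by_cases h : g.1 1 0 = 0
    · exact ⟨borel, (hmem _).2 (Or.inl rfl), h⟩
    by_cases h0 : tr g = 0
    · exact ⟨unip (g.1 0 1 / g.1 1 0), (hmem _).2 (Or.inr (Or.inr ⟨_, rfl⟩)), h0, by field_simp⟩
    · obtain ⟨p, hp⟩ := exists_mem_tor h0
      refine ⟨tor p, (hmem _).2 (Or.inr (Or.inl ⟨p, ?_, rfl⟩)), hp⟩
      intro hp2
      apply h
      rw [hp.2, hp2, zero_mul]
  · intro H hH K hK hne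
    rw [eq_bot_iff]
    rintro g ⟨hgH, hgK⟩
    change g ∈ H at hgH
    change g ∈ K at hgK
    rw [Subgroup.mem_bot]
    rw [hmem] at hH hK
    rcases hH with rfl | ⟨p, hp, rfl⟩ | ⟨u, rfl⟩ <;> rcases hK with rfl | ⟨p', hp', rfl⟩ | ⟨u', rfl⟩
    · exact absurd rfl hne
    · exact hbt _ hp' g hgH hgK
    · exact hbu _ g hgH hgK
    · exact hbt _ hp g hgK hgH
    · by_contra h1
      exact hne (by rw [tor_unique hgH hgK h1])
    · exact htu _ _ g hgH hgK
    · exact hbu _ g hgK hgH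
    · exact htu _ _ g hgK hgH
    · by_contra h1
      have hne0 : g.1 1 0 ≠ 0 := fun h0 => h1 (eq_one_of_mem_unip hgH h0)
      exact hne (by rw [mul_right_cancel₀ hne0 (hgH.2.symm.trans hgK.2)])
  · have h1 : T.card ≤ Nat.card F * (Nat.card F - 1) := by
      refine Finset.card_image_le.trans ?_
      rw [Finset.card_product, Finset.card_erase_of_mem (Finset.mem_univ _), Finset.card_univ,
        Nat.card_eq_fintype_card]
    have h2 : U.card ≤ Nat.card F := by
      refine Finset.card_image_le.trans ?_
      rw [Finset.card_univ, Nat.card_eq_fintype_card]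
    have h3 := Finset.card_insert_le (borel : Subgroup (SL2 F)) (T ∪ U)
    have h4 := Finset.card_union_le T U
    have h5 : 0 < Nat.card F := Nat.card_pos
    have h6 : Nat.card F * (Nat.card F - 1) + Nat.card F = Nat.card F ^ 2 := by
      obtain ⟨n, hn⟩ := Nat.exists_eq_succ_of_ne_zero h5.ne'
      rw [hn]; simp; ring
    omega

theorem rhoG_SL2 [Finite F] (hF : ∃ l : F, l ≠ 0 ∧ l ≠ 1) :
    rhoG (SL2 F) = Nat.card F ^ 2 + 1 := by
  obtain ⟨P, hP, hPc⟩ := exists_partition hF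
  apply le_antisymm
  · exact le_trans (Nat.sInf_le (by exact ⟨P, hP, rfl⟩)) hPc
  · have hne : {n | ∃ P : Finset (Subgroup (SL2 F)), IsPartitionOf P ∧ P.card = n}.Nonempty :=
      ⟨P.card, by exact ⟨P, hP, rfl⟩⟩
    obtain ⟨Q, hQ, hQc⟩ := Nat.sInf_mem hne
    rw [rhoG, ← hQc]
    exact card_lower_bound hF hQ

theorem center_eq_bot : Subgroup.center (SL2 F) = ⊥ := by
  rw [eq_bot_iff]
  intro g hg
  rw [Matrix.SpecialLinearGroup.mem_center_iff] at hg
  obtain ⟨r, hr, hg⟩ := hg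
  rw [Fintype.card_fin] at hr
  have h1 : (r + 1) ^ 2 = 0 := by grind
  have h2 : r + 1 = 0 := pow_eq_zero_iff (two_ne_zero) |>.1 h1
  have h3 : r = 1 := by grind
  rw [Subgroup.mem_bot]
  apply Subtype.ext
  rw [← hg, h3]
  simp

end Construction

/-! ### Transport along isomorphisms -/

theorem exists_partition_of_mulEquiv {G G' : Type*} [Group G] [Group G'] (e : G ≃* G') (n : ℕ)
    (h : ∃ P : Finset (Subgroup G), IsPartitionOf P ∧ P.card = n) :
    ∃ P : Finset (Subgroup G'), IsPartitionOf P ∧ P.card = n := by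
  obtain ⟨P, ⟨⟨hprop, hcov⟩, hdis⟩, hcard⟩ := h
  refine ⟨P.map e.mapSubgroup.toEquiv.toEmbedding, ⟨⟨?_, ?_⟩, ?_⟩, by rw [Finset.card_map, hcard]⟩
  · intro H hH
    rw [Finset.mem_map] at hH
    obtain ⟨K, hK, rfl⟩ := hH
    intro h
    exact hprop K hK ((map_eq_top_iff e.mapSubgroup).1 h)
  · intro g
    obtain ⟨H, hH, hg⟩ := hcov (e.symm g)
    refine ⟨_, Finset.mem_map_of_mem _ hH, ?_⟩
    exact ⟨e.symm g, hg, e.apply_symm_apply g⟩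
  · intro H hH K hK hne
    rw [Finset.mem_map] at hH hK
    obtain ⟨H, hH, rfl⟩ := hH
    obtain ⟨K, hK, rfl⟩ := hK
    have h1 := hdis H hH K hK fun h => hne (by rw [h])
    exact (e.mapSubgroup.map_inf H K).symm.trans ((congrArg _ h1).trans e.mapSubgroup.map_bot)

theorem rhoG_congr {G G' : Type*} [Group G] [Group G'] (e : G ≃* G') : rhoG G = rhoG G' := by
  unfold rhoG
  congr 1
  ext n
  exact ⟨exists_partition_of_mulEquiv e n, exists_partition_of_mulEquiv e.symm n⟩

end PSLTwo

theorem rho_PSL_two_char_two (q f : ℕ) (hf : q = 2 ^ f) (hq4 : 4 ≤ q)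
    (F : Type*) [Field F] [Fintype F] (hF : Fintype.card F = q) :
    rhoG (Matrix.SpecialLinearGroup (Fin 2) F ⧸
        Subgroup.center (Matrix.SpecialLinearGroup (Fin 2) F)) = q ^ 2 + 1 := by
  have : Fact (Nat.Prime 2) := ⟨Nat.prime_two⟩
  have : CharP F 2 := charP_of_card_eq_prime_pow (hF.trans hf)
  have hl : ∃ l : F, l ≠ 0 ∧ l ≠ 1 := by
    classical
    have h1 : ({0, 1} : Finset F).card < (Finset.univ : Finset F).card :=
      lt_of_le_of_lt Finset.card_le_two (by rw [Finset.card_univ]; omega)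
    obtain ⟨l, hl⟩ := Finset.exists_mem_notMem_of_card_lt_card h1
    simp only [Finset.mem_insert, Finset.mem_singleton, not_or] at hl
    exact ⟨l, hl.2⟩
  rw [PSLTwo.rhoG_congr ((QuotientGroup.quotientMulEquivOfEq PSLTwo.center_eq_bot).trans
    QuotientGroup.quotientBot), PSLTwo.rhoG_SL2 hl, Nat.card_eq_fintype_card, hF]
end

section
/- Let G be a finite group and let 𝒫 = {H₁, …, H_m} be a partition of G consisting of m distinct nontrivial proper subgroups. Then m ≥ 1 + |H_i| for every i ∈ {1, …, m}. -/
/-! A partition of `G` has more members than any single member has elements: for a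
member `H` and `x ∉ H`, the coset `H x` misses `H`, and every other member `K` contains at most one
of its points. Indeed, if `h x` and `h' x` both lie in `K`, then `h * h'⁻¹ ∈ H ⊓ K = ⊥`. So sending
`h` to a member containing `h x` embeds `H` into `P \ {H}`. -/

open Pointwise

theorem card_partition_ge (G : Type*) [Group G] [Finite G] (P : Finset (Subgroup G))
    (hP : IsPartitionOf P) (hnt : ∀ H ∈ P, H ≠ ⊥) :
    ∀ H ∈ P, 1 + Nat.card H ≤ P.card := by
  classical
  obtain ⟨⟨hproper, hcov⟩, hdisj⟩ := hP
  intro H hH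
  obtain ⟨x, hx⟩ : ∃ x, x ∉ H := by
    by_contra! h
    exact hproper H hH ((Subgroup.eq_top_iff' H).2 h)
  choose f hfP hf using hcov
  have hne (h : H) : f (h * x) ≠ H := fun e =>
    hx ((H.mul_mem_cancel_left h.2).1 (by simpa only [e] using hf (h * x)))
  have hinj : Function.Injective
      fun h : H => (⟨f (h * x), Finset.mem_erase.2 ⟨hne h, hfP _⟩⟩ : P.erase H) := by
    intro h h' e
    have e : f (h * x) = f (h' * x) := congrArg Subtype.val e
    have hK : (h : G) * (h' : G)⁻¹ ∈ f (h * x) := by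
      have := (f (h * x)).mul_mem (hf (h * x)) ((f (h * x)).inv_mem (by rw [e]; exact hf _))
      simpa [mul_assoc] using this
    have hbot : (h : G) * (h' : G)⁻¹ ∈ H ⊓ f (h * x) :=
      ⟨H.mul_mem h.2 (H.inv_mem h'.2), hK⟩
    rw [hdisj H hH _ (hfP _) (hne h).symm, Subgroup.mem_bot] at hbot
    exact Subtype.ext (mul_inv_eq_one.1 hbot)
  have hcard := Nat.card_le_card_of_injective _ hinj
  rw [Nat.card_eq_fintype_card (α := P.erase H), Fintype.card_coe] at hcard
  have := Finset.card_erase_add_one hH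
  omega
end

section
/- Let G be a finite group and let 𝒫 = {H₁, …, H_m} be a partition of G consisting of m distinct nontrivial proper subgroups. If some member H_i is normal in G and its index [G : H_i] is a prime number, then m = 1 + |H_i|. -/
/-!
Fix `g ∉ H`. Every element of the coset `g H` lies in some member of `P` other than `H`. A member
`K ≠ H` meets this coset in exactly one point: at most one since `K ⊓ H = ⊥`, and at least one
because `H`, being normal of prime index, is maximal, so that `K H = G`. Hence sending `h ∈ H` to
the member containing `g * h` is a bijection from `H` onto `P \ {H}`.
-/

open Pointwise

/-- The image of `K` in the group `G ⧸ H` of prime order is nontrivial, hence everything. -/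
theorem sup_eq_top_of_normal_prime_index {G : Type*} [Group G] {H K : Subgroup G}
    (hn : H.Normal) (hprime : H.index.Prime) (hK : ¬ K ≤ H) : K ⊔ H = ⊤ := by
  have : Fact (Nat.card (G ⧸ H)).Prime := ⟨hprime⟩
  rcases (K.map (QuotientGroup.mk' H)).eq_bot_or_eq_top_of_prime_card with h | h
  · rw [Subgroup.map_eq_bot_iff, QuotientGroup.ker_mk'] at h
    exact absurd h hK
  · have h' := congrArg (Subgroup.comap (QuotientGroup.mk' H)) h
    rwa [Subgroup.comap_map_eq, QuotientGroup.ker_mk', Subgroup.comap_top] at h'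

theorem card_partition_eq_of_normal_prime_index (G : Type*) [Group G] [Finite G]
    (P : Finset (Subgroup G)) (hP : IsPartitionOf P) (hnt : ∀ H ∈ P, H ≠ ⊥)
    (H : Subgroup G) (hH : H ∈ P) (hn : H.Normal) (hprime : H.index.Prime) :
    P.card = 1 + Nat.card H := by
  classical
  obtain ⟨⟨hproper, hcov⟩, hdisj⟩ := hP
  obtain ⟨g, hg⟩ : ∃ g, g ∉ H := by
    by_contra! h
    exact hproper H hH ((Subgroup.eq_top_iff' H).2 h)
  choose f hfP hf using hcov
  have hfH : ∀ h : H, f (g * h) ∈ P.erase H := fun h => by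
    refine Finset.mem_erase.2 ⟨fun e => hg ?_, hfP _⟩
    have := hf (g * h)
    rw [e] at this
    exact (H.mul_mem_cancel_right h.2).1 this
  let F : H → {K // K ∈ P.erase H} := fun h => ⟨f (g * h), hfH h⟩
  have hF : Function.Bijective F := by
    constructor
    · intro a b hab
      have e : f (g * a) = f (g * b) := congrArg Subtype.val hab
      obtain ⟨hne, hmem⟩ := Finset.mem_erase.1 (hfH b)
      have ha := hf (g * a)
      rw [e] at ha
      have h1 : (a : G)⁻¹ * b ∈ f (g * b) := by
        simpa [mul_assoc] using mul_mem (inv_mem ha) (hf (g * b))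
      have h2 : (a : G)⁻¹ * b ∈ f (g * b) ⊓ H := ⟨h1, H.mul_mem (H.inv_mem a.2) b.2⟩
      rw [hdisj _ hmem H hH hne, Subgroup.mem_bot] at h2
      exact Subtype.ext (inv_mul_eq_one.1 h2)
    · rintro ⟨K, hK⟩
      obtain ⟨hne, hKP⟩ := Finset.mem_erase.1 hK
      have hKH : ¬ K ≤ H := fun hle => hnt K hKP (by
        rw [← hdisj K hKP H hH hne, inf_eq_left.2 hle])
      have hgmem : g ∈ K ⊔ H := by
        rw [sup_eq_top_of_normal_prime_index hn hprime hKH]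
        trivial
      obtain ⟨k, hk, h, hh, rfl⟩ := Subgroup.mem_sup_of_normal_right.1 hgmem
      refine ⟨⟨h⁻¹, inv_mem hh⟩, Subtype.ext ?_⟩
      change f (k * h * h⁻¹) = K
      -- Distinct members share only the identity, whereas `k ≠ 1` lies in both.
      by_contra hcon
      have hkb : k ∈ f (k * h * h⁻¹) ⊓ K := ⟨by simpa using hf (k * h * h⁻¹), hk⟩
      rw [hdisj _ (hfP _) K hKP hcon, Subgroup.mem_bot] at hkb
      exact hg (by simpa [hkb] using hh)
  have hcard := Nat.card_eq_of_bijective F hF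
  rw [hcard, Nat.card_eq_fintype_card, Fintype.card_coe, add_comm, Finset.card_erase_add_one hH]
end

section
/- Let G be a finite partitionable group. Then ρ(G) ≥ 1 + ⌈√|G|⌉, where ⌈x⌉ denotes the least integer greater than or equal to x. -/
/-!
Let `P` be a partition of `G` and `s = √|G|`; two counting arguments give `1 + s ≤ |P|`.

* If some member `H` has `|H| ≥ s`, take a coset `gH ≠ H`. It is disjoint from `H`, and any other
  member `K` meets it in at most one element, because `K ∩ H = 1`. So covering `gH` takes at least
  `|H|` members besides `H`.
* If every member has order less than `s`, covering the `s² - 1` nontrivial elements by sets of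
  at most `s - 1` nontrivial elements each takes at least `(s² - 1) / (s - 1) = s + 1` members.
-/

open Pointwise

/-- Each point of a nontrivial coset of `H` lies in its own member of the partition other
than `H`. -/
lemma card_member_add_one_le {G : Type*} [Group G] [Finite G] {P : Finset (Subgroup G)}
    (hP : IsPartitionOf P) {H : Subgroup G} (hH : H ∈ P) : Nat.card H + 1 ≤ P.card := by
  classical
  obtain ⟨g, hg⟩ : ∃ g : G, g ∉ H := by
    by_contra! hall
    exact hP.1.1 H hH (H.eq_top_iff'.2 hall)
  have hcov : ∀ x : H, ∃ K ∈ P, g * (x : G) ∈ K := fun x => hP.1.2 _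
  choose f hfP hf using hcov
  have hne : ∀ x, f x ≠ H := fun x hx => hg <| by
    have h1 := hf x
    rw [hx] at h1
    exact (H.mul_mem_cancel_right x.2).1 h1
  have hinj : Function.Injective f := by
    intro x y hxy
    have h1 := hf y
    rw [← hxy] at h1
    have h2 : (x : G)⁻¹ * y ∈ f x ⊓ H := by
      refine ⟨?_, H.mul_mem (H.inv_mem x.2) y.2⟩
      have h3 := (f x).mul_mem ((f x).inv_mem (hf x)) h1
      simpa [mul_assoc] using h3
    rw [hP.2 _ (hfP x) _ hH (hne x), Subgroup.mem_bot] at h2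
    exact Subtype.ext (inv_mul_eq_one.1 h2)
  have hle : Nat.card H ≤ Nat.card (P.erase H) :=
    Nat.card_le_card_of_injective
      (fun x => (⟨f x, Finset.mem_erase.2 ⟨hne x, hfP x⟩⟩ : P.erase H))
      (fun x y hxy => hinj (congrArg Subtype.val hxy))
  rw [Nat.card_eq_fintype_card (α := P.erase H), Fintype.card_coe] at hle
  have h4 := Finset.card_erase_add_one hH
  omega

/-- The nontrivial elements of `G` are covered by those of the members of a cover. -/
lemma card_sub_one_le_sum {G : Type*} [Group G] [Finite G] {P : Finset (Subgroup G)}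
    (hP : IsCover P) : (Nat.card G : ℝ) - 1 ≤ ∑ K ∈ P, ((Nat.card K : ℝ) - 1) := by
  classical
  have := Fintype.ofFinite G
  have hsub : (Finset.univ : Finset G).erase 1 ⊆
      P.biUnion fun K => (Finset.univ.filter (· ∈ K)).erase 1 := by
    intro x hx
    obtain ⟨K, hK, hxK⟩ := hP.2 x
    simp only [Finset.mem_biUnion, Finset.mem_erase, Finset.mem_filter] at hx ⊢
    exact ⟨K, hK, hx.1, Finset.mem_univ _, hxK⟩
  have hle := (Finset.card_le_card hsub).trans Finset.card_biUnion_le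
  have hG := Finset.card_erase_add_one (Finset.mem_univ (1 : G))
  have hK : ∀ K : Subgroup G, (((Finset.univ.filter (· ∈ K)).erase 1).card : ℝ)
      = (Nat.card K : ℝ) - 1 := by
    intro K
    have h1 : (1 : G) ∈ Finset.univ.filter (· ∈ K) := by simp [K.one_mem]
    have h2 := Finset.card_erase_add_one h1
    have h3 : (Finset.univ.filter (· ∈ K)).card = Nat.card K := by
      rw [Nat.card_eq_fintype_card]
      exact (Fintype.card_subtype _).symm
    rw [← h3, ← h2]
    push_cast
    ring
  rw [Nat.card_eq_fintype_card, ← Finset.card_univ, ← hG, ← Finset.sum_congr rfl fun K _ => hK K]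
  push_cast
  rw [add_sub_cancel_right]
  exact_mod_cast hle

lemma one_add_sqrt_le_card {G : Type*} [Group G] [Finite G] {P : Finset (Subgroup G)}
    (hP : IsPartitionOf P) : 1 + √(Nat.card G : ℝ) ≤ P.card := by
  by_cases hbig : ∃ H ∈ P, √(Nat.card G : ℝ) ≤ Nat.card H
  · obtain ⟨H, hH, hs⟩ := hbig
    have h1 : (Nat.card H : ℝ) + 1 ≤ P.card := by exact_mod_cast card_member_add_one_le hP hH
    linarith
  · push Not at hbig
    have hsum := card_sub_one_le_sum hP.1
    have hle : ∑ K ∈ P, ((Nat.card K : ℝ) - 1) ≤ P.card * (√(Nat.card G : ℝ) - 1) := by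
      rw [← nsmul_eq_mul]
      exact Finset.sum_le_card_nsmul _ _ _ fun K hK => sub_le_sub_right (hbig K hK).le 1
    have hsq := Real.mul_self_sqrt (Nat.cast_nonneg (α := ℝ) (Nat.card G))
    -- The member containing `1` has order at least `1`, so `1 < √|G|` and dividing is legitimate.
    have hs1 : 1 < √(Nat.card G : ℝ) := by
      obtain ⟨K, hK, -⟩ := hP.1.2 1
      have h1 : (1 : ℝ) ≤ Nat.card K := by exact_mod_cast Nat.card_pos (α := K)
      exact h1.trans_lt (hbig K hK)
    nlinarith

theorem rho_ge_one_add_ceil_sqrt (G : Type*) [Group G] [Finite G] (h : Partitionable G) :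
    1 + ⌈Real.sqrt (Nat.card G)⌉₊ ≤ rhoG G := by
  obtain ⟨P, hP, hcard⟩ :
      rhoG G ∈ {n | ∃ P : Finset (Subgroup G), IsPartitionOf P ∧ P.card = n} := by
    obtain ⟨Q, hQ⟩ := h
    exact Nat.sInf_mem ⟨Q.card, Q, hQ, rfl⟩
  have hmain := one_add_sqrt_le_card hP
  have hpos : 1 ≤ P.card := Finset.one_le_card.2 <| by
    obtain ⟨K, hK, -⟩ := hP.1.2 1
    exact ⟨K, hK⟩
  have hceil : ⌈√(Nat.card G : ℝ)⌉₊ ≤ P.card - 1 := by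
    rw [Nat.ceil_le, Nat.cast_sub hpos]
    push_cast
    linarith
  rw [← hcard]
  omega
end

section
/- Let G be a finite partitionable group admitting a normal cyclic subgroup N of prime index. Then ρ(G) = 1 + |N|. -/
/-!
A subgroup `N` of prime index is maximal, so the member of a partition that contains a generator
of `N` is `N` itself. Drop the trivial subgroup from the partition if it occurs. Every remaining
member `H ≠ N` meets `N` trivially and is not contained in `N`, so `HN = G` and `H` is a
complement of `N`. Fix a coset `aN ≠ N`: each complement meets it in exactly one point, and each of
its points lies in exactly one member, which is not `N`. Hence there are exactly `|N|` members other
than `N`, and every partition into nontrivial subgroups has `1 + |N|` members. The case `N = ⊥` does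
not occur, since `G` would then be cyclic of prime order and a cyclic group has no cover.
-/

open Pointwise

/-- A subgroup of prime index is maximal. -/
lemma eq_or_eq_top_of_prime_index {G : Type*} [Group G] {N K : Subgroup G}
    (hp : N.index.Prime) (hNK : N ≤ K) : K = N ∨ K = ⊤ := by
  have hmul := Subgroup.relIndex_mul_index hNK
  rcases (Nat.dvd_prime hp).1 (Dvd.intro_left _ hmul) with h1 | h1
  · exact Or.inr (Subgroup.index_eq_one.1 h1)
  · left
    rw [h1] at hmul
    have h2 : N.relIndex K = 1 := Nat.eq_of_mul_eq_mul_right hp.pos (by rw [hmul, one_mul])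
    exact le_antisymm (Subgroup.relIndex_eq_one.1 h2) hNK

lemma IsCover.mem_of_isCyclic {G : Type*} [Group G] {P : Finset (Subgroup G)} (hP : IsCover P)
    {N : Subgroup G} (hc : IsCyclic N) (hp : N.index.Prime) : N ∈ P := by
  obtain ⟨x, hx⟩ := (Subgroup.isCyclic_iff_exists_zpowers_eq_top N).1 hc
  obtain ⟨H, hH, hxH⟩ := hP.2 x
  have hNH : N ≤ H := by
    rw [← hx]
    exact (Subgroup.zpowers_le).2 hxH
  rcases eq_or_eq_top_of_prime_index hp hNH with h | h
  · exact h ▸ hH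
  · exact absurd h (hP.1 H hH)

lemma IsCover.not_isCyclic {G : Type*} [Group G] {P : Finset (Subgroup G)} (hP : IsCover P) :
    ¬ IsCyclic G := by
  intro hc
  obtain ⟨x, hx⟩ := hc.exists_generator
  obtain ⟨H, hH, hxH⟩ := hP.2 x
  exact hP.1 H hH (eq_top_iff.2 fun y _ => (Subgroup.zpowers_le).2 hxH (hx y))

lemma IsCover.ne_bot {G : Type*} [Group G] {P : Finset (Subgroup G)} (hP : IsCover P)
    {N : Subgroup G} (hp : N.index.Prime) : N ≠ ⊥ := by
  rintro rfl
  rw [Subgroup.index_bot] at hp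
  have : Fact (Nat.card G).Prime := ⟨hp⟩
  exact hP.not_isCyclic (isCyclic_of_prime_card rfl)

open Classical in
/-- Sending `m ∈ N` to the member containing `a * m`, for a fixed `a ∉ N`, is a bijection from `N`
onto the members other than `N`. -/
lemma card_of_bot_notMem {G : Type*} [Group G] {P : Finset (Subgroup G)} (hP : IsPartitionOf P)
    {N : Subgroup G} (hn : N.Normal) (hp : N.index.Prime) (hN : N ∈ P) (hbot : ⊥ ∉ P) :
    P.card = 1 + Nat.card N := by
  obtain ⟨a, ha⟩ : ∃ a, a ∉ N := by
    by_contra! hall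
    exact hp.ne_one (Subgroup.index_eq_one.2 (eq_top_iff.2 fun x _ => hall x))
  choose F hF hmem using hP.1.2
  have haF : ∀ m : N, F (a * m) ∈ P.erase N := fun m => by
    refine Finset.mem_erase.2 ⟨fun h => ha ?_, hF _⟩
    have := hmem (a * m)
    rw [h] at this
    exact (Subgroup.mul_mem_cancel_right N m.2).1 this
  let f : N → (P.erase N : Finset (Subgroup G)) := fun m => ⟨F (a * m), haF m⟩
  have hf : Function.Bijective f := by
    constructor
    · intro m m' hmm
      have hE : F (a * m) = F (a * m') := congrArg Subtype.val hmm
      have h1 := hmem (a * m)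
      have h2 := hmem (a * m')
      rw [← hE] at h2
      have h3 : (m : G)⁻¹ * m' ∈ F (a * m) := by
        have := mul_mem (inv_mem h1) h2
        simpa [mul_assoc] using this
      have h4 : (m : G)⁻¹ * m' ∈ F (a * m) ⊓ N := ⟨h3, N.mul_mem (N.inv_mem m.2) m'.2⟩
      rw [hP.2 _ (hF _) _ hN (Finset.ne_of_mem_erase (haF m)), Subgroup.mem_bot] at h4
      exact Subtype.ext (inv_mul_eq_one.1 h4)
    · rintro ⟨H, hH⟩
      obtain ⟨hne, hHP⟩ := Finset.mem_erase.1 hH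
      have hdisj := hP.2 H hHP N hN hne
      have htop : H ⊔ N = ⊤ := by
        refine (eq_or_eq_top_of_prime_index hp le_sup_right).resolve_left fun h => ?_
        rw [inf_eq_left.2 (sup_eq_right.1 h)] at hdisj
        exact hbot (hdisj ▸ hHP)
      obtain ⟨y, hy, z, hz, hyz⟩ := Subgroup.mem_sup_of_normal_right.1
        (htop ▸ Subgroup.mem_top a : a ∈ H ⊔ N)
      refine ⟨⟨z⁻¹, N.inv_mem hz⟩, Subtype.ext ?_⟩
      have hay : a * z⁻¹ = y := by rw [← hyz, mul_inv_cancel_right]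
      change F (a * z⁻¹) = H
      rw [hay]
      by_contra hFH
      have hy1 : y ∈ F y ⊓ H := ⟨hmem y, hy⟩
      rw [hP.2 _ (hF y) _ hHP hFH, Subgroup.mem_bot] at hy1
      -- If `y = 1` then `a = z ∈ N`.
      rw [hy1, one_mul] at hyz
      exact ha (hyz ▸ hz)
  have hcard := Nat.card_eq_of_bijective f hf
  rw [Nat.card_eq_fintype_card (α := (P.erase N : Finset (Subgroup G))),
    Fintype.card_coe] at hcard
  rw [hcard, add_comm, Finset.card_erase_add_one hN]

open Classical in
lemma IsPartitionOf.erase_bot {G : Type*} [Group G] {P : Finset (Subgroup G)}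
    (hP : IsPartitionOf P) {N : Subgroup G} (hN : N ∈ P) (hNb : N ≠ ⊥) :
    IsPartitionOf (P.erase ⊥) := by
  refine ⟨⟨fun H hH => hP.1.1 H (Finset.mem_of_mem_erase hH), fun g => ?_⟩,
    fun H hH K hK => hP.2 H (Finset.mem_of_mem_erase hH) K (Finset.mem_of_mem_erase hK)⟩
  obtain ⟨H, hH, hg⟩ := hP.1.2 g
  by_cases hb : H = ⊥
  · rw [hb, Subgroup.mem_bot] at hg
    exact ⟨N, Finset.mem_erase.2 ⟨hNb, hN⟩, hg ▸ N.one_mem⟩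
  · exact ⟨H, Finset.mem_erase.2 ⟨hb, hH⟩, hg⟩

theorem rho_of_normal_cyclic_prime_index (G : Type*) [Group G] [Finite G]
    (h : Partitionable G) (N : Subgroup G) (hn : N.Normal) (hc : IsCyclic N)
    (hprime : N.index.Prime) :
    rhoG G = 1 + Nat.card N := by
  classical
  have key : ∀ P : Finset (Subgroup G), IsPartitionOf P →
      IsPartitionOf (P.erase ⊥) ∧ (P.erase ⊥).card = 1 + Nat.card N := by
    intro P hP
    have hN := hP.1.mem_of_isCyclic hc hprime
    have hNb := hP.1.ne_bot hprime
    have hE := hP.erase_bot hN hNb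
    exact ⟨hE, card_of_bot_notMem hE hn hprime (Finset.mem_erase.2 ⟨hNb, hN⟩)
      (Finset.notMem_erase _ _)⟩
  obtain ⟨P, hP⟩ := h
  refine le_antisymm (Nat.sInf_le ⟨_, key P hP⟩) (le_csInf ⟨_, _, key P hP⟩ ?_)
  rintro n ⟨Q, hQ, rfl⟩
  rw [← (key Q hQ).2]
  exact Finset.card_le_card (Finset.erase_subset _ _)
end

section
/- Let H and G be finite partitionable groups with H a subgroup of G. Then ρ(H) ≤ ρ(G). -/
/-!
Let `P` be a partition of `G` with `ρ(G)` members. If no member of `P` contains `H`, the traces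
`K ⊓ H` of the members `K` form a partition of `H` with at most `ρ(G)` members
(`IsPartitionOf.image_subgroupOf`).

Otherwise `H ≤ K` for some `K ∈ P`, and both sides are compared with the order of `K`. Choose
`x ∉ K`. The `|K|` elements of the coset `K x` lie in pairwise distinct members of `P`, all of them
different from `K`, so `|K| < ρ(G)` (`IsPartitionOf.card_lt`). On the other hand any partition of
`H` has at most `|H| ≤ |K|` members, since its members other than the trivial subgroup contain
pairwise distinct nonidentity elements (`IsPartitionOf.card_le`).
-/

open Pointwise

theorem rhoG_le {G : Type*} [Group G] {P : Finset (Subgroup G)} (hP : IsPartitionOf P) :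
    rhoG G ≤ P.card :=
  Nat.sInf_le ⟨P, hP, rfl⟩

theorem IsPartitionOf.eq_of_mem {G : Type*} [Group G] {P : Finset (Subgroup G)}
    (hP : IsPartitionOf P) {K L : Subgroup G} (hK : K ∈ P) (hL : L ∈ P) {g : G} (hg : g ≠ 1)
    (hgK : g ∈ K) (hgL : g ∈ L) : K = L := by
  by_contra hne
  have h : g ∈ K ⊓ L := ⟨hgK, hgL⟩
  rw [hP.2 K hK L hL hne, Subgroup.mem_bot] at h
  exact hg h

/-- Choosing a nonidentity element in each nontrivial member, and `1` in the trivial subgroup,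
injects a partition into the group. -/
theorem IsPartitionOf.card_le {G : Type*} [Group G] [Finite G] {P : Finset (Subgroup G)}
    (hP : IsPartitionOf P) : P.card ≤ Nat.card G := by
  have hch : ∀ K : Subgroup G, ∃ g ∈ K, g = 1 → K = ⊥ := by
    intro K
    by_cases hK : K = ⊥
    · exact ⟨1, K.one_mem, fun _ => hK⟩
    · obtain ⟨g, hg⟩ := K.ne_bot_iff_exists_ne_one.mp hK
      exact ⟨g, g.2, fun h => absurd (Subtype.ext h) hg⟩
  choose f hf hf1 using hch
  have hinj : Function.Injective fun K : P => f K := by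
    rintro ⟨K, hK⟩ ⟨L, hL⟩ (h : f K = f L)
    apply Subtype.ext
    by_cases h1 : f K = 1
    · exact (hf1 K h1).trans (hf1 L (h ▸ h1)).symm
    · exact hP.eq_of_mem hK hL h1 (hf K) (h ▸ hf L)
  have hle := Nat.card_le_card_of_injective _ hinj
  rwa [Nat.card_eq_fintype_card (α := P), Fintype.card_coe] at hle

/-- The elements `k * x` of a coset of a member `K` with `x ∉ K` lie in pairwise distinct members
of the partition, none of which is `K`. -/
theorem IsPartitionOf.card_lt {G : Type*} [Group G] {P : Finset (Subgroup G)}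
    (hP : IsPartitionOf P) {K : Subgroup G} (hK : K ∈ P) : Nat.card K < P.card := by
  classical
  obtain ⟨x, hx⟩ : ∃ x, x ∉ K := by
    by_contra! h
    exact hP.1.1 K hK ((Subgroup.eq_top_iff' K).mpr h)
  choose f hfP hf using hP.1.2
  have hfK : ∀ k : K, f (k * x) ≠ K := fun k h =>
    hx ((K.mul_mem_cancel_left k.2).mp (h.le (hf (k * x))))
  let φ : K → (P.erase K : Finset (Subgroup G)) := fun k =>
    ⟨f (k * x), Finset.mem_erase.mpr ⟨hfK k, hfP _⟩⟩
  have hφ : Function.Injective φ := by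
    intro k l hkl
    have h : f (k * x) = f (l * x) := congrArg Subtype.val hkl
    by_contra hne
    have hmem : (k * l⁻¹ : G) ∈ f (k * x) := by
      have := (f (k * x)).mul_mem (hf (k * x)) ((f (k * x)).inv_mem (h ▸ hf (l * x)))
      simpa [mul_assoc] using this
    refine hfK k (hP.eq_of_mem (hfP _) hK ?_ hmem (K.mul_mem k.2 (K.inv_mem l.2)))
    exact fun h1 => hne (Subtype.ext (mul_inv_eq_one.mp h1))
  have hle := Nat.card_le_card_of_injective φ hφ
  rw [Nat.card_eq_fintype_card (α := (P.erase K : Finset (Subgroup G))), Fintype.card_coe] at hle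
  exact hle.trans_lt (Finset.card_erase_lt_of_mem hK)

open Classical in
theorem IsPartitionOf.image_subgroupOf {G : Type*} [Group G] {P : Finset (Subgroup G)}
    (hP : IsPartitionOf P) {H : Subgroup G} (hH : ∀ K ∈ P, ¬ H ≤ K) :
    IsPartitionOf (P.image fun K => K.subgroupOf H) := by
  refine ⟨⟨?_, ?_⟩, ?_⟩
  · simp only [Finset.forall_mem_image, ne_eq, Subgroup.subgroupOf_eq_top]
    exact fun K hK => hH K hK
  · intro g
    obtain ⟨K, hK, hg⟩ := hP.1.2 g
    exact ⟨_, Finset.mem_image_of_mem _ hK, Subgroup.mem_subgroupOf.mpr hg⟩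
  · simp only [Finset.forall_mem_image]
    intro K hK L hL hne
    refine (Subgroup.eq_bot_iff_forall _).mpr fun g hg => ?_
    by_contra h1
    refine hne (congrArg (·.subgroupOf H) (hP.eq_of_mem hK hL (g := g) ?_ ?_ ?_))
    · exact fun h => h1 (Subtype.ext h)
    · exact Subgroup.mem_subgroupOf.mp hg.1
    · exact Subgroup.mem_subgroupOf.mp hg.2

theorem rho_mono (G : Type*) [Group G] [Finite G] (H : Subgroup G)
    (hH : Partitionable H) (hG : Partitionable G) :
    rhoG H ≤ rhoG G := by
  classical
  obtain ⟨P, hP, hcard⟩ : ∃ P : Finset (Subgroup G), IsPartitionOf P ∧ P.card = rhoG G :=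
    Nat.sInf_mem (s := {n | ∃ P : Finset (Subgroup G), IsPartitionOf P ∧ P.card = n})
      (hG.elim fun P hP => ⟨P.card, P, hP, rfl⟩)
  rw [← hcard]
  by_cases h : ∃ K ∈ P, H ≤ K
  · obtain ⟨K, hK, hHK⟩ := h
    obtain ⟨Q, hQ⟩ := hH
    calc rhoG H ≤ Q.card := rhoG_le hQ
      _ ≤ Nat.card H := hQ.card_le
      _ ≤ Nat.card K := Subgroup.card_le_of_le hHK
      _ ≤ P.card := (hP.card_lt hK).le
  · push Not at h
    exact (rhoG_le (hP.image_subgroupOf h)).trans Finset.card_image_le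
end

section
/- Let G be a finite nilpotent partitionable group. Then σ(G) = ρ(G) if and only if G is isomorphic to C_p × C_p (the direct product of two cyclic groups of order p) for some prime p. -/
/-!
For a finite nilpotent group `G` with a partition, the argument runs as follows.

* Two commuting elements of distinct prime orders lie in the same component of a partition, since
  both are powers of their product. In a nilpotent group elements of distinct prime orders always
  commute, so if two primes divided `|G|`, one component would contain an element of each prime
  order and hence every element of `G`. Therefore `G` is a `p`-group (`exists_card_eq_prime_pow`).
* `G` is not cyclic, so it has two distinct maximal subgroups. Each is the kernel of a surjection
  `fᵢ : G → C_p`, and the kernels of `f₁` and of `f₂ * f₁ ^ i`, for `i < p`, cover `G`. Hence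
  `σ(G) ≤ p + 1` (`sigmaG_le`).
* If `|G| = p ^ (m + 2)` has a partition with at most `p + 1` components, then counting nonidentity
  elements forces a component of order `p ^ (m + 1)`; the other components meet it trivially and so
  have order at most `p`. Counting again gives `m = 0` (`eq_zero_of_partition`). Finally a group of
  order `p ^ 2` with two maximal subgroups is `C_p × C_p`, through `(f₁, f₂)`.
* Conversely, distinct proper subgroups of a group of order `p ^ 2` intersect trivially, so every
  cover is already a partition.
-/

open Pointwise

/-! ### Components of a partition -/

/-- A nonidentity element lies in only one component. -/
lemma IsPartitionOf.eq_of_mem_s10 {G : Type*} [Group G] {P : Finset (Subgroup G)}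
    (hP : IsPartitionOf P) {H K : Subgroup G} (hH : H ∈ P) (hK : K ∈ P) {x : G} (hx : x ≠ 1)
    (hxH : x ∈ H) (hxK : x ∈ K) : H = K := by
  by_contra hne
  have h : x ∈ H ⊓ K := ⟨hxH, hxK⟩
  rw [hP.2 H hH K hK hne, Subgroup.mem_bot] at h
  exact hx h

lemma commute_of_orderOf_prime {G : Type*} [Group G] [Finite G] (hnil : Group.IsNilpotent G)
    {p q : ℕ} (hp : p.Prime) (hq : q.Prime) (hpq : p ≠ q) {x y : G} (hx : orderOf x = p)
    (hy : orderOf y = q) : Commute x y := by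
  have := Fact.mk hp
  have := Fact.mk hq
  have hn := ((Group.isNilpotent_of_finite_tfae (G := G)).out 0 3).mp hnil
  have hX : IsPGroup p (Subgroup.zpowers x) :=
    IsPGroup.of_card (n := 1) (by rw [Nat.card_zpowers, hx, pow_one])
  have hY : IsPGroup q (Subgroup.zpowers y) :=
    IsPGroup.of_card (n := 1) (by rw [Nat.card_zpowers, hy, pow_one])
  obtain ⟨A, hA⟩ := hX.exists_le_sylow
  obtain ⟨B, hB⟩ := hY.exists_le_sylow
  exact Subgroup.commute_of_normal_of_disjoint _ _ (hn p ‹_› A) (hn q ‹_› B)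
    (IsPGroup.disjoint_of_ne p q hpq _ _ A.isPGroup' B.isPGroup') x y
    (hA (Subgroup.mem_zpowers x)) (hB (Subgroup.mem_zpowers y))

/-- In a nilpotent group, elements of distinct prime orders lie in the same component. -/
lemma IsPartitionOf.mem_of_orderOf_prime {G : Type*} [Group G] [Finite G]
    (hnil : Group.IsNilpotent G) {P : Finset (Subgroup G)} (hP : IsPartitionOf P)
    {p q : ℕ} (hp : p.Prime) (hq : q.Prime) (hpq : p ≠ q) {x y : G} (hx : orderOf x = p)
    (hy : orderOf y = q) {H : Subgroup G} (hH : H ∈ P) (hxH : x ∈ H) : y ∈ H := by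
  have hc := commute_of_orderOf_prime hnil hp hq hpq hx hy
  obtain ⟨K, hK, hxyK⟩ := hP.1.2 (x * y)
  have h1 : (x * y) ^ q = x ^ q := by
    rw [hc.mul_pow, ← hy, pow_orderOf_eq_one, mul_one]
  have h2 : x ^ q ≠ 1 := by
    intro h
    have := orderOf_dvd_of_pow_eq_one h
    rw [hx] at this
    exact hpq ((Nat.prime_dvd_prime_iff_eq hp hq).mp this)
  have h3 : H = K := hP.eq_of_mem_s10 hH hK h2 (H.pow_mem hxH q) (h1 ▸ K.pow_mem hxyK q)
  subst h3
  exact (H.mul_mem_cancel_left hxH).mp hxyK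

lemma exists_card_eq_prime_pow {G : Type*} [Group G] [Finite G]
    (hnil : Group.IsNilpotent G) {P : Finset (Subgroup G)} (hP : IsPartitionOf P) :
    ∃ p n : ℕ, p.Prime ∧ Nat.card G = p ^ n := by
  by_cases h1 : Nat.card G = 1
  · exact ⟨2, 0, Nat.prime_two, by simpa using h1⟩
  obtain ⟨p, hp, hpd⟩ := Nat.exists_prime_and_dvd h1
  refine ⟨p, _, hp, Nat.eq_prime_pow_of_unique_prime_dvd Nat.card_pos.ne' ?_⟩
  intro q hq hqd
  by_contra hqp
  have := Fact.mk hp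
  have := Fact.mk hq
  obtain ⟨x, hx⟩ := exists_prime_orderOf_dvd_card' p hpd
  obtain ⟨y, hy⟩ := exists_prime_orderOf_dvd_card' q hqd
  obtain ⟨H, hH, hxH⟩ := hP.1.2 x
  have hyH := hP.mem_of_orderOf_prime hnil hp hq (Ne.symm hqp) hx hy hH hxH
  refine hP.1.1 H hH ((Subgroup.eq_top_iff' H).mpr fun g => ?_)
  by_cases hg : g = 1
  · exact hg ▸ H.one_mem
  -- A power `g ^ k` of prime order `r` lies in `H`, since `r` differs from `p` or from `q`.
  obtain ⟨r, hr, k, hk⟩ := Nat.exists_prime_and_dvd (mt orderOf_eq_one_iff.mp hg)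
  have hgk : orderOf (g ^ k) = r := by
    have hpos := orderOf_pos g
    rw [orderOf_pow, hk, Nat.gcd_eq_right (Dvd.intro_left r rfl)]
    exact Nat.mul_div_cancel _ (Nat.pos_of_ne_zero (by rintro rfl; simp [hk] at hpos))
  have hgkH : g ^ k ∈ H := by
    by_cases hrp : r = p
    · exact hP.mem_of_orderOf_prime hnil hq hr (by rw [hrp]; exact hqp) hy hgk hH hyH
    · exact hP.mem_of_orderOf_prime hnil hp hr (Ne.symm hrp) hx hgk hH hxH
  obtain ⟨K, hK, hgK⟩ := hP.1.2 g
  have hne : g ^ k ≠ 1 := by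
    intro h
    rw [h, orderOf_one] at hgk
    exact hr.one_lt.ne hgk
  rw [hP.eq_of_mem_s10 hH hK hne hgkH (K.pow_mem hgK k)]
  exact hgK

/-! ### Maximal subgroups of a finite `p`-group -/

/-- A group covered by proper subgroups is not cyclic, so it has two distinct maximal subgroups. -/
lemma IsCover.exists_two_coatoms {G : Type*} [Group G] [Finite G] {P : Finset (Subgroup G)}
    (hP : IsCover P) : ∃ M N : Subgroup G, IsCoatom M ∧ IsCoatom N ∧ M ≠ N := by
  have hz : ∀ g : G, Subgroup.zpowers g ≠ ⊤ := by
    intro g h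
    obtain ⟨H, hH, hg⟩ := hP.2 g
    exact hP.1 H hH (top_le_iff.mp (h ▸ Subgroup.zpowers_le.mpr hg))
  obtain ⟨M, hM, -⟩ := (eq_top_or_exists_le_coatom (Subgroup.zpowers (1 : G))).resolve_left (hz 1)
  obtain ⟨g, hg⟩ : ∃ g, g ∉ M := by
    by_contra! h
    exact hM.1 ((Subgroup.eq_top_iff' M).mpr h)
  obtain ⟨N, hN, hgN⟩ := (eq_top_or_exists_le_coatom (Subgroup.zpowers g)).resolve_left (hz g)
  refine ⟨M, N, hM, hN, ?_⟩
  rintro rfl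
  exact hg (hgN (Subgroup.mem_zpowers g))

lemma exists_hom_ker_eq_coatom {G : Type*} [Group G] [Finite G] (hnil : Group.IsNilpotent G)
    {p n : ℕ} [hp : Fact p.Prime] (hG : Nat.card G = p ^ n) {M : Subgroup G} (hM : IsCoatom M) :
    ∃ f : G →* Multiplicative (ZMod p), f.ker = M := by
  have hn : M.Normal :=
    Subgroup.NormalizerCondition.normal_of_coatom _ Group.normalizerCondition_of_isNilpotent hM
  obtain ⟨k, hkn, hk⟩ := (Nat.dvd_prime_pow hp.out).mp (hG ▸ M.card_subgroup_dvd_card)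
  have hlt : k < n := by
    refine lt_of_le_of_ne hkn ?_
    rintro rfl
    exact hM.1 (Subgroup.eq_top_of_card_eq M (hk.trans hG.symm))
  obtain ⟨K, hK, hMK⟩ := Sylow.exists_subgroup_card_pow_succ
    (hG ▸ pow_dvd_pow p (Nat.succ_le_of_lt hlt)) hk
  have hKtop : K = ⊤ := by
    refine hM.2 K (lt_of_le_of_ne hMK ?_)
    rintro rfl
    exact absurd (Nat.pow_right_injective hp.out.two_le (hk.symm.trans hK)) (by omega)
  have hq : Nat.card (G ⧸ M) = p := by
    have h1 := M.card_eq_card_quotient_mul_card_subgroup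
    rw [hKtop, Subgroup.card_top] at hK
    rw [hK, hk, pow_succ'] at h1
    exact (Nat.eq_of_mul_eq_mul_right (pow_pos hp.out.pos k) h1).symm
  have hz : Nat.card (Multiplicative (ZMod p)) = p := by simp
  refine ⟨(mulEquivOfPrimeCardEq hq hz).toMonoidHom.comp (QuotientGroup.mk' M), ?_⟩
  ext g
  simp

lemma IsCover.sigmaG_le_card {G : Type*} [Group G] {P : Finset (Subgroup G)} (hP : IsCover P) :
    sigmaG G ≤ P.card :=
  Nat.sInf_le ⟨P, hP, rfl⟩

/-- Two maximal subgroups `ker f₁ ≠ ker f₂` of index `p` produce the cover of `G` by the `p + 1`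
index-`p` subgroups containing their intersection. -/
lemma sigmaG_le {G : Type*} [Group G] {p : ℕ} [hp : Fact p.Prime]
    {f₁ f₂ : G →* Multiplicative (ZMod p)} (h₁ : IsCoatom f₁.ker) (h₂ : IsCoatom f₂.ker)
    (hne : f₁.ker ≠ f₂.ker) : sigmaG G ≤ p + 1 := by
  classical
  let P : Finset (Subgroup G) :=
    insert f₁.ker ((Finset.range p).image fun i => (f₂ * f₁ ^ i).ker)
  have hP : IsCover P := by
    constructor
    · intro H hH
      simp only [P, Finset.mem_insert, Finset.mem_image, Finset.mem_range] at hH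
      rcases hH with rfl | ⟨i, -, rfl⟩
      · exact h₁.1
      · intro htop
        -- On `ker f₁` the map `f₂ * f₁ ^ i` agrees with `f₂`.
        have hle : f₁.ker ≤ f₂.ker := by
          intro x hx
          have h : x ∈ (f₂ * f₁ ^ i).ker := htop ▸ Subgroup.mem_top x
          rw [MonoidHom.mem_ker] at h hx ⊢
          simpa [hx] using h
        exact h₂.1 (h₁.2 _ (lt_of_le_of_ne hle hne))
    · intro g
      by_cases hg : g ∈ f₁.ker
      · exact ⟨_, Finset.mem_insert_self _ _, hg⟩
      · have hz : Nat.card (Multiplicative (ZMod p)) = p := by simp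
        obtain ⟨k, hk⟩ := mem_powers_of_prime_card (g' := (f₂ g)⁻¹) hz hg
        refine ⟨(f₂ * f₁ ^ (k % p)).ker, Finset.mem_insert_of_mem
          (Finset.mem_image_of_mem _ (Finset.mem_range.mpr (Nat.mod_lt _ hp.out.pos))), ?_⟩
        have hpow : f₁ g ^ (k % p) = (f₂ g)⁻¹ := by
          have hmod := pow_mod_natCard (f₁ g) k
          rw [hz] at hmod
          exact hmod.trans hk
        simp [MonoidHom.mem_ker, hpow]
  calc sigmaG G ≤ P.card := hP.sigmaG_le_card
    _ ≤ _ := Finset.card_insert_le _ _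
    _ ≤ p + 1 := by
      gcongr
      exact Finset.card_image_le.trans (Finset.card_range p).le

/-! ### Counting elements -/

lemma IsCover.card_sub_one_le {G : Type*} [Group G] [Finite G] {P : Finset (Subgroup G)}
    (hP : IsCover P) : Nat.card G - 1 ≤ ∑ H ∈ P, (Nat.card H - 1) := by
  classical
  have := Fintype.ofFinite G
  have hcard : ∀ H : Subgroup G,
      (Finset.univ.filter fun x : G => x ∈ H ∧ x ≠ 1).card = Nat.card H - 1 := by
    intro H
    have : (Finset.univ.filter fun x : G => x ∈ H ∧ x ≠ 1)
        = (Finset.univ.filter fun x : G => x ∈ H).erase 1 := by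
      ext x; simp [and_comm]
    rw [this, Finset.card_erase_of_mem (by simp), Nat.card_eq_fintype_card, Fintype.card_subtype]
  calc Nat.card G - 1 = (Finset.univ.erase (1 : G)).card := by
        rw [Finset.card_erase_of_mem (Finset.mem_univ _), Finset.card_univ,
          Nat.card_eq_fintype_card]
    _ ≤ (P.biUnion fun H => Finset.univ.filter fun x : G => x ∈ H ∧ x ≠ 1).card := by
        refine Finset.card_le_card fun x hx => ?_
        obtain ⟨H, hH, hxH⟩ := hP.2 x
        exact Finset.mem_biUnion.mpr ⟨H, hH, by simpa [hxH] using hx⟩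
    _ ≤ _ := Finset.card_biUnion_le
    _ = _ := Finset.sum_congr rfl fun H _ => hcard H

lemma eq_zero_of_partition {G : Type*} [Group G] [Finite G] {p m : ℕ} (hp : p.Prime)
    (hG : Nat.card G = p ^ (m + 2)) {P : Finset (Subgroup G)} (hP : IsPartitionOf P)
    (hcard : P.card ≤ p + 1) : m = 0 := by
  classical
  have hcount := hP.1.card_sub_one_le
  have hp2 := hp.two_le
  have hm : 1 ≤ p ^ m := Nat.one_le_pow _ _ hp.pos
  rw [hG] at hcount
  have hbig : ∃ H ∈ P, p ^ (m + 1) ≤ Nat.card H := by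
    by_contra! hsmall
    have hle : ∀ H ∈ P, Nat.card H - 1 ≤ p ^ m - 1 := by
      intro H hH
      obtain ⟨k, -, hk⟩ := (Nat.dvd_prime_pow hp).mp (hG ▸ H.card_subgroup_dvd_card)
      have h := hsmall H hH
      rw [hk] at h ⊢
      have : k < m + 1 := (Nat.pow_lt_pow_iff_right hp.one_lt).mp h
      exact Nat.sub_le_sub_right (Nat.pow_le_pow_right hp.pos (by omega)) 1
    have hs : p ^ (m + 2) - 1 ≤ (p + 1) * (p ^ m - 1) := by
      refine hcount.trans ((Finset.sum_le_card_nsmul P _ _ hle).trans ?_)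
      rw [smul_eq_mul]
      exact Nat.mul_le_mul_right _ hcard
    obtain ⟨a, ha⟩ := Nat.exists_eq_add_of_le hm
    rw [pow_add, ha, Nat.add_sub_cancel_left] at hs
    have : (1 + a) * p ^ 2 ≤ (p + 1) * a + 1 := by omega
    nlinarith [Nat.mul_le_mul_left (1 + a) (show p + p ≤ p ^ 2 by nlinarith)]
  obtain ⟨H, hH, hHbig⟩ := hbig
  have hHle : Nat.card H ≤ p ^ (m + 1) := by
    obtain ⟨k, hk2, hk⟩ := (Nat.dvd_prime_pow hp).mp (hG ▸ H.card_subgroup_dvd_card)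
    rw [hk]
    refine Nat.pow_le_pow_right hp.pos ?_
    by_contra h
    have : k = m + 2 := by omega
    exact hP.1.1 H hH (Subgroup.eq_top_of_card_eq H (by rw [hk, this, hG]))
  have hle : ∀ K ∈ P.erase H, Nat.card K - 1 ≤ p - 1 := by
    intro K hK
    obtain ⟨hne, hK⟩ := Finset.mem_erase.mp hK
    -- Since `H` and `K` are disjoint, `|H| * |K| ≤ |G|`.
    have hinj := Subgroup.mul_injective_of_disjoint
      (disjoint_iff.mpr (hP.2 H hH K hK hne.symm))
    have h := Nat.card_le_card_of_injective _ hinj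
    rw [Nat.card_prod, hG, pow_succ] at h
    have h' := (Nat.mul_le_mul_right (Nat.card K) hHbig).trans h
    exact Nat.sub_le_sub_right (Nat.le_of_mul_le_mul_left h' (pow_pos hp.pos _)) 1
  have hs : p ^ (m + 2) - 1 ≤ (p ^ (m + 1) - 1) + p * (p - 1) := by
    refine hcount.trans ?_
    rw [← Finset.add_sum_erase P _ hH]
    refine Nat.add_le_add (Nat.sub_le_sub_right hHle 1)
      ((Finset.sum_le_card_nsmul _ _ _ hle).trans ?_)
    rw [smul_eq_mul, Finset.card_erase_of_mem hH]
    exact Nat.mul_le_mul_right _ (by omega)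
  by_contra hm0
  obtain ⟨j, rfl⟩ := Nat.exists_eq_succ_of_ne_zero hm0
  obtain ⟨c, rfl⟩ := Nat.exists_eq_add_of_le hp2
  have h1 : 1 ≤ (2 + c) ^ j := Nat.one_le_pow _ _ hp.pos
  have e1 : (2 + c) ^ (j.succ + 2) = (2 + c) ^ j * (2 + c) ^ 3 := by rw [← pow_add]
  have e2 : (2 + c) ^ (j.succ + 1) = (2 + c) ^ j * (2 + c) ^ 2 := by rw [← pow_add]
  have e3 : 2 + c - 1 = 1 + c := by omega
  rw [e1, e2, e3] at hs
  generalize (2 + c) ^ j = t at *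
  have h2 : 1 ≤ t * (2 + c) ^ 2 := Nat.mul_pos h1 (by positivity)
  have h3 : t * (2 + c) ^ 3 ≤ t * (2 + c) ^ 2 + (2 + c) * (1 + c) := by omega
  have h4 : t * (2 + c) ^ 3 = t * (2 + c) ^ 2 + t * ((2 + c) ^ 2 * (1 + c)) := by ring
  have h5 : 1 * ((2 + c) ^ 2 * (1 + c)) ≤ t * ((2 + c) ^ 2 * (1 + c)) :=
    Nat.mul_le_mul_right _ h1
  nlinarith [Nat.zero_le (c * c), Nat.zero_le (c * c * c)]

/-! ### Groups of order `p ^ 2` -/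

lemma inf_eq_bot_of_card_sq {G : Type*} [Group G] [Finite G] {p : ℕ} (hp : p.Prime)
    (hG : Nat.card G = p ^ 2) {H K : Subgroup G} (hH : H ≠ ⊤) (hK : K ≠ ⊤) (hne : H ≠ K) :
    H ⊓ K = ⊥ := by
  have key : ∀ L : Subgroup G, L ≠ ⊤ → Nat.card L ≤ p := by
    intro L hL
    obtain ⟨k, hk2, hk⟩ := (Nat.dvd_prime_pow hp).mp (hG ▸ L.card_subgroup_dvd_card)
    have hk' : k ≠ 2 := by
      rintro rfl
      exact hL (Subgroup.eq_top_of_card_eq L (hk.trans hG.symm))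
    calc Nat.card L = p ^ k := hk
      _ ≤ p ^ 1 := Nat.pow_le_pow_right hp.pos (by omega)
      _ = p := pow_one p
  by_contra hbot
  obtain ⟨k, -, hk⟩ := (Nat.dvd_prime_pow hp).mp (hG ▸ (H ⊓ K).card_subgroup_dvd_card)
  have hk0 : k ≠ 0 := by
    rintro rfl
    exact hbot (Subgroup.eq_bot_of_card_eq _ (by simpa using hk))
  have hge : p ≤ Nat.card (H ⊓ K : Subgroup G) := hk ▸ Nat.le_self_pow hk0 p
  have e1 : H ⊓ K = H := Subgroup.eq_of_le_of_card_ge inf_le_left ((key H hH).trans hge)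
  have e2 : H ⊓ K = K := Subgroup.eq_of_le_of_card_ge inf_le_right ((key K hK).trans hge)
  exact hne (e1.symm.trans e2)

lemma IsCover.isPartitionOf_of_card_sq {G : Type*} [Group G] [Finite G] {p : ℕ} (hp : p.Prime)
    (hG : Nat.card G = p ^ 2) {P : Finset (Subgroup G)} (hP : IsCover P) : IsPartitionOf P :=
  ⟨hP, fun _ hH _ hK hne => inf_eq_bot_of_card_sq hp hG (hP.1 _ hH) (hP.1 _ hK) hne⟩

lemma sigmaG_eq_rhoG_of_card_sq {G : Type*} [Group G] [Finite G] {p : ℕ} (hp : p.Prime)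
    (hG : Nat.card G = p ^ 2) : sigmaG G = rhoG G := by
  unfold sigmaG rhoG
  congr 1
  ext n
  exact exists_congr fun P =>
    and_congr_left fun _ => ⟨fun h => h.isPartitionOf_of_card_sq hp hG, fun h => h.1⟩

lemma nonempty_mulEquiv_of_card_sq {G : Type*} [Group G] [Finite G] {p : ℕ} [hp : Fact p.Prime]
    (hG : Nat.card G = p ^ 2) {f₁ f₂ : G →* Multiplicative (ZMod p)} (h₁ : f₁.ker ≠ ⊤)
    (h₂ : f₂.ker ≠ ⊤) (hne : f₁.ker ≠ f₂.ker) :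
    Nonempty (G ≃* Multiplicative (ZMod p × ZMod p)) := by
  have hinj : Function.Injective (f₁.prod f₂) := by
    rw [← MonoidHom.ker_eq_bot_iff, MonoidHom.ker_prod]
    exact inf_eq_bot_of_card_sq hp.out hG h₁ h₂ hne
  have hbij : Function.Bijective (f₁.prod f₂) :=
    (Nat.bijective_iff_injective_and_card _).mpr ⟨hinj, by
      rw [hG, Nat.card_prod]; simp [sq]⟩
  exact ⟨(MulEquiv.ofBijective _ hbij).trans (MulEquiv.prodMultiplicative _ _).symm⟩

theorem nilpotent_sigma_eq_rho_iff (G : Type*) [Group G] [Finite G]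
    (hnil : Group.IsNilpotent G) (hpart : Partitionable G) :
    sigmaG G = rhoG G ↔
      ∃ p : ℕ, p.Prime ∧ Nonempty (G ≃* Multiplicative (ZMod p × ZMod p)) := by
  constructor
  · intro heq
    obtain ⟨P₀, hP₀⟩ := hpart
    obtain ⟨p, n, hp, hG⟩ := exists_card_eq_prime_pow hnil hP₀
    have := Fact.mk hp
    obtain ⟨M, N, hM, hN, hMN⟩ := hP₀.1.exists_two_coatoms
    obtain ⟨f₁, rfl⟩ := exists_hom_ker_eq_coatom hnil hG hM
    obtain ⟨f₂, rfl⟩ := exists_hom_ker_eq_coatom hnil hG hN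
    -- `ρ(G)` is attained because the set of sizes of partitions is nonempty.
    obtain ⟨P, hP, hPcard⟩ : ∃ P : Finset (Subgroup G), IsPartitionOf P ∧ P.card = rhoG G :=
      Nat.sInf_mem (s := {n | ∃ P : Finset (Subgroup G), IsPartitionOf P ∧ P.card = n})
        ⟨_, P₀, hP₀, rfl⟩
    have hPle : P.card ≤ p + 1 := by
      rw [hPcard, ← heq]
      exact sigmaG_le hM hN hMN
    -- Groups of order `1` or `p` have at most one proper subgroup.
    have hn : 2 ≤ n := by
      by_contra! hlt
      have hbot : ∀ L : Subgroup G, L ≠ ⊤ → L = ⊥ := by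
        intro L hL
        obtain ⟨k, hkn, hk⟩ := (Nat.dvd_prime_pow hp).mp (hG ▸ L.card_subgroup_dvd_card)
        have hk' : k ≠ n := by
          rintro rfl
          exact hL (Subgroup.eq_top_of_card_eq L (hk.trans hG.symm))
        have hk0 : k = 0 := by omega
        exact Subgroup.eq_bot_of_card_eq _ (by rw [hk, hk0, pow_zero])
      exact hMN ((hbot _ hM.1).trans (hbot _ hN.1).symm)
    obtain ⟨m, rfl⟩ := Nat.exists_eq_add_of_le' hn
    have hm := eq_zero_of_partition hp hG hP hPle
    rw [hm] at hG
    exact ⟨p, hp, nonempty_mulEquiv_of_card_sq hG hM.1 hN.1 hMN⟩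
  · rintro ⟨p, hp, ⟨e⟩⟩
    refine sigmaG_eq_rhoG_of_card_sq hp ?_
    rw [Nat.card_congr (e.toEquiv.trans Multiplicative.toAdd), Nat.card_prod, Nat.card_zmod, sq]
end

section
/- Let p be a prime and let n ≥ 2 be an integer. Then ρ((C_p)ⁿ) = 1 + p^⌈n/2⌉, where (C_p)ⁿ denotes the elementary abelian p-group of rank n (the direct product of n copies of the cyclic group of order p) and ⌈n/2⌉ is the least integer greater than or equal to n/2. -/
/-!
Put `m = ⌈n/2⌉`.

For the lower bound let `H` be a member of a partition of a group of order `p ^ n`. A nontrivial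
coset of `H` is disjoint from `H`, and any other member, meeting `H` trivially, contains at most
one of its elements; so there are at least `1 + |H|` members (`one_add_card_le`). This is enough
when some member has order at least `p ^ m`. If instead all members have order at most
`p ^ (m - 1)`, then counting nontrivial elements shows that `p ^ m` members cannot suffice
(`lower_bound`).

For the upper bound let `F` be the field with `p ^ m` elements and identify the group with
`F × W`, where `W` is a nonzero additive subgroup of `F` of order `p ^ (n - m)`. The subgroup
`F × 0` and the graphs `{(a * w, w) | w ∈ W}`, one for each `a ∈ F`, form a partition
(`exists_partition`).
-/

open Pointwise

lemma one_add_card_le {G : Type*} [Group G] [Finite G] {P : Finset (Subgroup G)}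
    (hP : IsPartitionOf P) {H : Subgroup G} (hH : H ∈ P) : 1 + Nat.card H ≤ P.card := by
  classical
  obtain ⟨⟨hproper, hcov⟩, htriv⟩ := hP
  obtain ⟨x, hx⟩ : ∃ x, x ∉ H := by
    by_contra! h
    exact hproper H hH (Subgroup.eq_top_iff' H |>.2 h)
  choose f hfP hf using hcov
  have hne (h : H) : f (x * h) ≠ H := by
    intro he
    have h1 := hf (x * h)
    rw [he] at h1
    exact hx ((H.mul_mem_cancel_right h.2).1 h1)
  -- The member containing `x * h` determines `h`, since it meets `H` trivially.
  let g : H → (P.erase H : Finset _) := fun h =>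
    ⟨f (x * h), Finset.mem_erase.2 ⟨hne h, hfP _⟩⟩
  have hg : Function.Injective g := by
    intro a b hab
    have hab' : f (x * a) = f (x * b) := congrArg Subtype.val hab
    have h1 : (x * a : G)⁻¹ * (x * b) ∈ f (x * a) :=
      mul_mem (inv_mem (hf _)) (hab' ▸ hf _)
    have h2 : (x * a : G)⁻¹ * (x * b) = (a : G)⁻¹ * b := by group
    rw [h2] at h1
    have h3 : (a : G)⁻¹ * b ∈ f (x * a) ⊓ H := ⟨h1, H.mul_mem (H.inv_mem a.2) b.2⟩
    rw [htriv _ (hfP _) _ hH (hne a), Subgroup.mem_bot] at h3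
    exact Subtype.ext (inv_mul_eq_one.1 h3)
  have h4 := Nat.card_le_card_of_injective g hg
  rw [Nat.card_eq_fintype_card (α := (P.erase H : Finset _)), Fintype.card_coe,
    Finset.card_erase_of_mem hH] at h4
  have := Finset.card_pos.2 ⟨H, hH⟩
  omega

lemma lower_bound {G : Type*} [Group G] [Finite G] {p n : ℕ} (hp : p.Prime) (hn : 2 ≤ n)
    (hG : Nat.card G = p ^ n) {P : Finset (Subgroup G)} (hP : IsPartitionOf P) :
    1 + p ^ ((n + 1) / 2) ≤ P.card := by
  classical
  have := Fintype.ofFinite G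
  obtain ⟨k, hk⟩ : ∃ k, (n + 1) / 2 = k + 1 := ⟨(n + 1) / 2 - 1, by omega⟩
  by_cases hbig : ∃ H ∈ P, p ^ (k + 1) ≤ Nat.card H
  · obtain ⟨H, hH, hle⟩ := hbig
    have := one_add_card_le hP hH
    rw [hk]
    omega
  push Not at hbig
  have hsmall : ∀ H ∈ P, Nat.card H ≤ p ^ k := by
    intro H hH
    obtain ⟨j, -, hj⟩ := (Nat.dvd_prime_pow hp).1 (hG ▸ Subgroup.card_subgroup_dvd_card H)
    have h1 := hbig H hH
    rw [hj] at h1 ⊢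
    have := (Nat.pow_lt_pow_iff_right hp.one_lt).1 h1
    exact Nat.pow_le_pow_right hp.pos (by omega)
  have hcount : (Finset.univ.erase (1 : G)).card ≤ P.card * (p ^ k - 1) := by
    have hsub : Finset.univ.erase (1 : G) ⊆
        P.biUnion fun H => (Finset.univ.filter (· ∈ H)).erase 1 := by
      intro g hg
      obtain ⟨H, hH, hgH⟩ := hP.1.2 g
      simp only [Finset.mem_biUnion]
      exact ⟨H, hH, by simpa [hgH] using hg⟩
    refine (Finset.card_le_card hsub).trans (Finset.card_biUnion_le_card_mul _ _ _ ?_)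
    intro H hH
    rw [Finset.card_erase_of_mem (by simp [one_mem])]
    have h1 := hsmall H hH
    rw [Nat.card_eq_fintype_card, Fintype.card_subtype] at h1
    omega
  rw [Finset.card_erase_of_mem (Finset.mem_univ _), Finset.card_univ, ← Nat.card_eq_fintype_card,
    hG] at hcount
  rw [hk]
  by_contra! hlt
  have h1 : P.card * (p ^ k - 1) ≤ p ^ (k + 1) * (p ^ k - 1) :=
    Nat.mul_le_mul_right _ (by omega)
  rw [Nat.mul_sub (p ^ (k + 1)), ← pow_add, mul_one] at h1
  have h2 : p ^ (k + 1 + k) ≤ p ^ n := Nat.pow_le_pow_right hp.pos (by omega)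
  have h3 : 1 < p ^ (k + 1) := Nat.one_lt_pow (by omega) hp.one_lt
  have h4 : p ^ (k + 1) ≤ p ^ (k + 1 + k) := Nat.pow_le_pow_right hp.pos (by omega)
  omega

/-- The subgroup `{g | φ g = a * ψ g}`: for `φ`, `ψ` the coordinates on `F × W`, it is the graph of
multiplication by `a` on `W`. -/
def slopeSubgroup {G F : Type*} [Group G] [Field F] (φ ψ : G →* Multiplicative F) (a : F) :
    Subgroup G :=
  φ.eqLocus ((AddMonoidHom.toMultiplicative (AddMonoidHom.mulLeft a)).comp ψ)

lemma mem_slopeSubgroup {G F : Type*} [Group G] [Field F] (φ ψ : G →* Multiplicative F) (a : F)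
    (g : G) : g ∈ slopeSubgroup φ ψ a ↔ (φ g).toAdd = a * (ψ g).toAdd := Iff.rfl

/-- The hypothesis `hinj` says that `(φ, ψ)` embeds `G` in `F × F`; the element `x` makes `ker ψ`
proper, and `y` makes the graphs proper. Only an upper bound on the size is claimed, so the graphs
need not be shown distinct. -/
lemma exists_partition {G F : Type*} [Group G] [Field F] [Finite F] (φ ψ : G →* Multiplicative F)
    (hinj : ∀ g, φ g = 1 → ψ g = 1 → g = 1) (x : G) (hx : ψ x ≠ 1)
    (y : G) (hy : ψ y = 1) (hy' : φ y ≠ 1) :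
    ∃ P : Finset (Subgroup G), IsPartitionOf P ∧ P.card ≤ 1 + Nat.card F := by
  classical
  have := Fintype.ofFinite F
  have hker (a : F) : ψ.ker ⊓ slopeSubgroup φ ψ a = ⊥ := by
    rw [eq_bot_iff]
    rintro g ⟨h1, h2⟩
    have h1' : ψ g = 1 := h1
    have h2' := (mem_slopeSubgroup φ ψ a g).1 h2
    rw [h1', toAdd_one, mul_zero] at h2'
    exact hinj g h2' h1'
  refine ⟨insert ψ.ker (Finset.univ.image (slopeSubgroup φ ψ)), ⟨⟨?_, ?_⟩, ?_⟩, ?_⟩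
  · intro H hH
    simp only [Finset.mem_insert, Finset.mem_image, Finset.mem_univ, true_and] at hH
    rcases hH with rfl | ⟨a, rfl⟩
    · intro h
      exact hx (show x ∈ ψ.ker from h ▸ Subgroup.mem_top x)
    · intro h
      have h1 := (mem_slopeSubgroup φ ψ a y).1 (h ▸ Subgroup.mem_top y)
      rw [hy, toAdd_one, mul_zero] at h1
      exact hy' h1
  · intro g
    by_cases h : ψ g = 1
    · exact ⟨ψ.ker, by simp, h⟩
    · have h' : (ψ g).toAdd ≠ 0 := h
      refine ⟨slopeSubgroup φ ψ ((φ g).toAdd / (ψ g).toAdd), by simp, ?_⟩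
      rw [mem_slopeSubgroup, div_mul_cancel₀ _ h']
  · intro H hH K hK hne
    simp only [Finset.mem_insert, Finset.mem_image, Finset.mem_univ, true_and] at hH hK
    rcases hH with rfl | ⟨a, rfl⟩ <;> rcases hK with rfl | ⟨b, rfl⟩
    · exact absurd rfl hne
    · exact hker b
    · rw [inf_comm]
      exact hker a
    · have hab : a ≠ b := fun h => hne (h ▸ rfl)
      rw [eq_bot_iff]
      rintro g ⟨h1, h2⟩
      have h0 : (ψ g).toAdd = 0 := by
        have h3 := ((mem_slopeSubgroup φ ψ a g).1 h1).symm.trans ((mem_slopeSubgroup φ ψ b g).1 h2)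
        by_contra h0
        exact hab (mul_right_cancel₀ h0 h3)
      rw [← hker a]
      exact ⟨h0, h1⟩
  · refine (Finset.card_insert_le _ _).trans ?_
    have h1 := Finset.card_image_le (s := Finset.univ) (f := slopeSubgroup φ ψ)
    rw [Finset.card_univ, ← Nat.card_eq_fintype_card] at h1
    omega

lemma upper_bound (p n : ℕ) (hp : p.Prime) (hn : 2 ≤ n) :
    ∃ P : Finset (Subgroup (Fin n → Multiplicative (ZMod p))),
      IsPartitionOf P ∧ P.card ≤ 1 + p ^ ((n + 1) / 2) := by
  have := Fact.mk hp
  obtain ⟨m, hm⟩ : ∃ m, (n + 1) / 2 = m := ⟨_, rfl⟩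
  have hm0 : m ≠ 0 := by omega
  rw [hm, ← GaloisField.card p m hm0]
  let L : (Fin m → ZMod p) ≃ₗ[ZMod p] GaloisField p m :=
    LinearEquiv.ofFinrankEq _ _ (by rw [GaloisField.finrank p hm0, Module.finrank_fin_fun])
  -- `φ` reads off the first `m` coordinates and `ψ` the remaining `n - m ≤ m`, padded by zeros.
  let φ : (Fin n → Multiplicative (ZMod p)) →* Multiplicative (GaloisField p m) :=
    MonoidHom.mk' (fun g => .ofAdd (L fun i => (g ⟨i, by omega⟩).toAdd)) (by
      intro g h
      rw [← ofAdd_add, ← map_add]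
      rfl)
  let ψ : (Fin n → Multiplicative (ZMod p)) →* Multiplicative (GaloisField p m) :=
    MonoidHom.mk' (fun g => .ofAdd (L fun i =>
        if h : m + i < n then (g ⟨m + i, h⟩).toAdd else 0)) (by
      intro g h
      rw [← ofAdd_add, ← map_add]
      congr 2
      ext i
      by_cases hi : m + i < n <;> simp [hi])
  have hφ (g) : φ g = 1 ↔ ∀ i : Fin m, g ⟨i, by omega⟩ = 1 := by
    change L _ = 0 ↔ _
    rw [LinearEquiv.map_eq_zero_iff, funext_iff]
    rfl
  have hψ (g) : ψ g = 1 ↔ ∀ i : Fin m, ∀ h : m + i < n, g ⟨m + i, h⟩ = 1 := by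
    change L _ = 0 ↔ _
    rw [LinearEquiv.map_eq_zero_iff, funext_iff]
    refine forall_congr' fun i => ?_
    by_cases hi : m + i < n
    · simp [hi]
    · simp [hi]
  have hne : (Multiplicative.ofAdd 1 : Multiplicative (ZMod p)) ≠ 1 := by
    intro h
    exact one_ne_zero (α := ZMod p) h
  refine exists_partition φ ψ ?_ (fun _ => .ofAdd 1) ?_
    (fun j => if (j : ℕ) < m then .ofAdd 1 else 1) ?_ ?_
  · intro g h1 h2
    rw [hφ] at h1
    rw [hψ] at h2
    ext1 j
    by_cases hj : (j : ℕ) < m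
    · exact h1 ⟨j, hj⟩
    · have h3 := h2 ⟨j - m, by omega⟩ (by simp only; omega)
      simpa [Nat.add_sub_cancel' (not_lt.1 hj)] using h3
  · rw [Ne, hψ]
    intro h
    exact hne (h ⟨0, by omega⟩ (by simp only; omega))
  · rw [hψ]
    intro i hi
    simp
  · rw [Ne, hφ]
    intro h
    have h1 := h ⟨0, by omega⟩
    rw [if_pos (by simp only; omega)] at h1
    exact hne h1

theorem rho_elementary_abelian (p n : ℕ) (hp : p.Prime) (hn : 2 ≤ n) :
    rhoG (Fin n → Multiplicative (ZMod p)) = 1 + p ^ ((n + 1) / 2) := by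
  have : NeZero p := ⟨hp.ne_zero⟩
  have : Finite (Multiplicative (ZMod p)) := inferInstanceAs (Finite (ZMod p))
  have hcard : Nat.card (Fin n → Multiplicative (ZMod p)) = p ^ n := by
    rw [Nat.card_fun, Nat.card_fin, Nat.card_congr Multiplicative.toAdd, Nat.card_zmod]
  obtain ⟨P, hP, hle⟩ := upper_bound p n hp hn
  have hrho : rhoG (Fin n → Multiplicative (ZMod p)) ≤ P.card := Nat.sInf_le ⟨P, hP, rfl⟩
  refine le_antisymm (hrho.trans hle) ?_
  refine le_csInf ⟨P.card, P, hP, rfl⟩ ?_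
  rintro _ ⟨Q, hQ, rfl⟩
  exact lower_bound hp hn hcard hQ
end

section
/- ρ(S₄) = 10, where S₄ is the symmetric group on 4 letters. -/
/-!
The identity is the only element shared by two members of a partition `P` of `S₄`, so a nontrivial
element lies in exactly one member, and a member containing a power `g ^ k ≠ 1` contains `g`.
Every double transposition is the square of a 4-cycle. Hence a member containing two double
transpositions contains two 4-cycles that generate `S₄` (`double_unique`). It follows that in a
member containing a double transposition `d`, every nontrivial element is `d` or a square root of
`d` (`eq_or_sq_eq`).

Consequently at most one point stabilizer `S₃` lies inside a member of `P`: members containing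
two different ones coincide, because the stabilizers share a transposition, and a double
transposition arises as a product of elements of the two, contrary to `eq_or_sq_eq`
(`exists_point`). If `d` is a point such that no other stabilizer lies in a member, then the ten
elements formed by generators of the three cyclic subgroups of order 4, generators of the four
subgroups of order 3, and the three transpositions moving `d` lie in pairwise distinct members: any
two of them either produce a forbidden double transposition or generate the stabilizer of a point
other than `d` (`rep_clash`). This gives
`10 ≤ |P|`.

Conversely, the stabilizer of a point together with the cyclic groups generated by the other nine
of these elements is a partition.
-/

open Pointwise

open Equiv

namespace SymmFour

/-- `g` is a double transposition: an involution without fixed points. -/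
def IsDouble (g : Perm (Fin 4)) : Prop := ∀ i, g i ≠ i ∧ g (g i) = i

instance (g : Perm (Fin 4)) : Decidable (IsDouble g) := by unfold IsDouble; infer_instance

/-- Generators of the three cyclic subgroups of order 4. -/
def fourCycle : Fin 3 → Perm (Fin 4) :=
  ![swap 0 1 * swap 1 2 * swap 2 3, swap 0 1 * swap 1 3 * swap 3 2, swap 0 2 * swap 2 1 * swap 1 3]

/-- A 3-cycle with fixed point `l`. -/
def threeCycle (l : Fin 4) : Perm (Fin 4) :=
  swap (l.succAbove 0) (l.succAbove 1) * swap (l.succAbove 1) (l.succAbove 2)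

/-- The ten elements attached to a point `d`: generators of the cyclic subgroups of order 4 and of
order 3, and the transpositions moving `d`. -/
def rep (d : Fin 4) : Fin 3 ⊕ Fin 4 ⊕ Fin 3 → Perm (Fin 4)
  | .inl k => fourCycle k
  | .inr (.inl l) => threeCycle l
  | .inr (.inr k) => swap d (d.succAbove k)

/-- Some short word `w` in `x` and `y` is a double transposition, while `x` is neither `w` nor a
square root of `w`. By `eq_or_sq_eq`, such `x ≠ 1` and `y` do not lie in a common member. -/
def DoubleClash (x y : Perm (Fin 4)) : Prop :=
  ∃ w ∈ [y * y, x * y, x * y⁻¹, x * y * (x * y)], IsDouble w ∧ ¬ (x = w ∨ x * x = w)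

instance (x y : Perm (Fin 4)) : Decidable (DoubleClash x y) := by
  unfold DoubleClash; infer_instance

/-- Every permutation fixing `l` is one of six words in `x` and `y`: those enumerating a symmetric
group of degree 3 in terms of a transposition `x` and a further generator `y`. -/
def GenStab (x y : Perm (Fin 4)) (l : Fin 4) : Prop :=
  ∀ g : Perm (Fin 4), g l = l → g ∈ [1, x, y, x * y, y * x, x * y * x]

instance (x y : Perm (Fin 4)) (l : Fin 4) : Decidable (GenStab x y l) := by
  unfold GenStab; infer_instance

/-! ### Finite checks in `S₄` -/

lemma rep_ne_one : ∀ d i, rep d i ≠ 1 := by decide +kernel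

lemma rep_clash : ∀ d i j, i ≠ j →
    DoubleClash (rep d i) (rep d j) ∨ DoubleClash (rep d j) (rep d i) ∨
    ∃ l, l ≠ d ∧ (GenStab (rep d i) (rep d j) l ∨ GenStab (rep d j) (rep d i) l) := by
  decide +kernel

lemma IsDouble.ne_one {d : Perm (Fin 4)} (hd : IsDouble d) : d ≠ 1 := by
  rintro rfl
  exact (hd 0).1 rfl

lemma IsDouble.exists_sqrt : ∀ d, IsDouble d → ∃ r, r * r = d := by decide +kernel

/-- Conjugation by an element outside the centralizer of the double transposition `r * r` moves it;
the centralizer is dihedral of order 8, so its elements are powers of `r` or produce a second double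
transposition. -/
lemma double_cases : ∀ r x : Perm (Fin 4), IsDouble (r * r) → x ≠ 1 →
    (x = r * r ∨ x * x = r * r) ∨
    (IsDouble x ∧ x ≠ r * r) ∨ (IsDouble (x * r) ∧ x * r ≠ r * r) ∨
    (IsDouble (x * (r * r) * x⁻¹) ∧ x * (r * r) * x⁻¹ ≠ r * r) := by
  decide +kernel

/-- Square roots `r` and `s` of two different double transpositions are 4-cycles generating
`S₄`. -/
lemma sqrt_generate : ∀ r s : Perm (Fin 4), IsDouble (r * r) → IsDouble (s * s) → r * r ≠ s * s →
    ∀ g, ∃ i j k : Fin 4, g = r ^ i.val * s ^ j.val * r ^ k.val := by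
  decide +kernel

lemma stab_inter : ∀ d l : Fin 4, ∃ t : Perm (Fin 4), t ≠ 1 ∧ t d = d ∧ t l = l := by
  decide +kernel

lemma stab_double : ∀ d l : Fin 4, d ≠ l → ∃ a b : Perm (Fin 4),
    a d = d ∧ b l = l ∧ IsDouble (a * b) ∧ a ≠ 1 ∧ ¬ (a = a * b ∨ a * a = a * b) := by
  decide +kernel

/-! ### The lower bound -/

section LowerBound

variable {P : Finset (Subgroup (Perm (Fin 4)))} {K : Subgroup (Perm (Fin 4))}

lemma member_unique (hP : IsPartitionOf P) {H : Subgroup (Perm (Fin 4))} (hH : H ∈ P) (hK : K ∈ P)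
    {g : Perm (Fin 4)} (hg : g ≠ 1) (hgH : g ∈ H) (hgK : g ∈ K) : H = K := by
  by_contra hne
  have h : g ∈ H ⊓ K := ⟨hgH, hgK⟩
  rw [hP.2 H hH K hK hne] at h
  exact hg (Subgroup.mem_bot.1 h)

lemma mem_of_sq_mem (hP : IsPartitionOf P) (hK : K ∈ P) {r : Perm (Fin 4)} (hr : r * r ≠ 1)
    (h : r * r ∈ K) : r ∈ K := by
  obtain ⟨H, hH, hrH⟩ := hP.1.2 r
  exact member_unique hP hH hK hr (mul_mem hrH hrH) h ▸ hrH

lemma double_unique (hP : IsPartitionOf P) (hK : K ∈ P) {d e : Perm (Fin 4)} (hd : IsDouble d)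
    (he : IsDouble e) (hdK : d ∈ K) (heK : e ∈ K) : d = e := by
  by_contra hne
  obtain ⟨r, rfl⟩ := hd.exists_sqrt
  obtain ⟨s, rfl⟩ := he.exists_sqrt
  have hr := mem_of_sq_mem hP hK hd.ne_one hdK
  have hs := mem_of_sq_mem hP hK he.ne_one heK
  refine hP.1.1 K hK ((Subgroup.eq_top_iff' K).2 fun g => ?_)
  obtain ⟨i, j, k, rfl⟩ := sqrt_generate r s hd he hne g
  exact mul_mem (mul_mem (pow_mem hr _) (pow_mem hs _)) (pow_mem hr _)

lemma eq_or_sq_eq (hP : IsPartitionOf P) (hK : K ∈ P) {d x : Perm (Fin 4)} (hd : IsDouble d)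
    (hdK : d ∈ K) (hx : x ≠ 1) (hxK : x ∈ K) : x = d ∨ x * x = d := by
  obtain ⟨r, rfl⟩ := hd.exists_sqrt
  have hr := mem_of_sq_mem hP hK hd.ne_one hdK
  rcases double_cases r x hd hx with h | ⟨h, hne⟩ | ⟨h, hne⟩ | ⟨h, hne⟩
  · exact h
  · exact absurd (double_unique hP hK h hd hxK hdK) hne
  · exact absurd (double_unique hP hK h hd (mul_mem hxK hr) hdK) hne
  · exact absurd (double_unique hP hK h hd (mul_mem (mul_mem hxK hdK) (inv_mem hxK)) hdK) hne

lemma not_doubleClash (hP : IsPartitionOf P) (hK : K ∈ P) {x y : Perm (Fin 4)} (hx : x ≠ 1)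
    (hxK : x ∈ K) (hyK : y ∈ K) : ¬ DoubleClash x y := by
  rintro ⟨w, hw, hd, hne⟩
  refine hne (eq_or_sq_eq hP hK hd ?_ hx hxK)
  simp only [List.mem_cons, List.not_mem_nil, or_false] at hw
  have hxy := mul_mem hxK hyK
  rcases hw with rfl | rfl | rfl | rfl
  · exact mul_mem hyK hyK
  · exact hxy
  · exact mul_mem hxK (inv_mem hyK)
  · exact mul_mem hxy hxy

lemma GenStab.mem {x y : Perm (Fin 4)} {l : Fin 4} (h : GenStab x y l) (hx : x ∈ K) (hy : y ∈ K)
    (g : Perm (Fin 4)) (hg : g l = l) : g ∈ K := by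
  have hg := h g hg
  simp only [List.mem_cons, List.not_mem_nil, or_false] at hg
  rcases hg with rfl | rfl | rfl | rfl | rfl | rfl
  · exact one_mem _
  · exact hx
  · exact hy
  · exact mul_mem hx hy
  · exact mul_mem hy hx
  · exact mul_mem (mul_mem hx hy) hx

/-- At most one point stabilizer is contained in a member of a partition. -/
lemma exists_point (hP : IsPartitionOf P) :
    ∃ d : Fin 4, ∀ l, l ≠ d → ∀ K ∈ P, ¬ ∀ g : Perm (Fin 4), g l = l → g ∈ K := by
  by_cases h : ∃ d : Fin 4, ∃ K ∈ P, ∀ g : Perm (Fin 4), g d = d → g ∈ K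
  · obtain ⟨d, K, hK, hdK⟩ := h
    refine ⟨d, fun l hl H hH hlH => ?_⟩
    obtain ⟨t, ht, htd, htl⟩ := stab_inter d l
    obtain rfl := member_unique hP hK hH ht (hdK t htd) (hlH t htl)
    obtain ⟨a, b, had, hbl, hab, ha, hne⟩ := stab_double d l hl.symm
    exact hne (eq_or_sq_eq hP hK hab (mul_mem (hdK a had) (hlH b hbl)) ha (hdK a had))
  · exact ⟨0, fun l _ K hK hl => h ⟨l, K, hK, hl⟩⟩

lemma ten_le_card (hP : IsPartitionOf P) : 10 ≤ P.card := by
  obtain ⟨d, hd⟩ := exists_point hP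
  choose M hMP hM using hP.1.2
  have hinj : Function.Injective fun i => (⟨M (rep d i), hMP _⟩ : P) := by
    intro i j hij
    have hMij : M (rep d i) = M (rep d j) := congrArg Subtype.val hij
    by_contra hne
    have hi := hM (rep d i)
    have hj : rep d j ∈ M (rep d i) := hMij ▸ hM (rep d j)
    have hK := hMP (rep d i)
    rcases rep_clash d i j hne with h | h | ⟨l, hl, h | h⟩
    · exact not_doubleClash hP hK (rep_ne_one d i) hi hj h
    · exact not_doubleClash hP hK (rep_ne_one d j) hj hi h
    · exact hd l hl _ hK (h.mem hi hj)
    · exact hd l hl _ hK (h.mem hj hi)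
  simpa using Fintype.card_le_of_injective _ hinj

end LowerBound

/-! ### A partition with ten members -/

/-- Membership in the `i`-th member of the partition attached to the point `3`: its stabilizer, in
place of the group generated by the 3-cycle fixing it, and the cyclic groups generated by the other
nine elements `rep 3 i`. These have order at most 4, so four powers suffice. -/
def InPart (i : Fin 3 ⊕ Fin 4 ⊕ Fin 3) (g : Perm (Fin 4)) : Prop :=
  if i = .inr (.inl 3) then g 3 = 3
  else g ∈ [1, rep 3 i, rep 3 i * rep 3 i, rep 3 i * rep 3 i * rep 3 i]

instance (i : Fin 3 ⊕ Fin 4 ⊕ Fin 3) (g : Perm (Fin 4)) : Decidable (InPart i g) := by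
  unfold InPart; infer_instance

lemma inPart_mul : ∀ i g, InPart i g → ∀ h, InPart i h → InPart i (g * h) := by decide +kernel

lemma inPart_inv : ∀ i g, InPart i g → InPart i g⁻¹ := by decide +kernel

lemma inPart_one : ∀ i, InPart i 1 := by decide +kernel

lemma inPart_rep : ∀ i, InPart i (rep 3 i) := by decide +kernel

lemma inPart_ne_top : ∀ i, ∃ g, ¬ InPart i g := by decide +kernel

lemma inPart_cover : ∀ g, ∃ i, InPart i g := by decide +kernel

lemma inPart_disjoint : ∀ i j, i ≠ j → ∀ g, InPart i g → InPart j g → g = 1 := by decide +kernel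

/-- The members of the partition attached to the point `3`. -/
def part (i : Fin 3 ⊕ Fin 4 ⊕ Fin 3) : Subgroup (Perm (Fin 4)) where
  carrier := {g | InPart i g}
  mul_mem' := fun {g h} hg hh => inPart_mul i g hg h hh
  one_mem' := inPart_one i
  inv_mem' := fun {g} hg => inPart_inv i g hg

lemma part_injective : Function.Injective part := by
  intro i j hij
  by_contra hne
  have h : rep 3 i ∈ part j := hij ▸ inPart_rep i
  exact rep_ne_one 3 i (inPart_disjoint i j hne _ (inPart_rep i) h)

lemma isPartitionOf_part : IsPartitionOf (Finset.univ.map ⟨part, part_injective⟩) := by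
  refine ⟨⟨fun H hH => ?_, fun g => ?_⟩, fun H hH K hK hne => ?_⟩
  · obtain ⟨i, -, rfl⟩ := Finset.mem_map.1 hH
    obtain ⟨g, hg⟩ := inPart_ne_top i
    exact fun h => hg ((Subgroup.eq_top_iff' _).1 h g)
  · obtain ⟨i, hi⟩ := inPart_cover g
    exact ⟨part i, Finset.mem_map.2 ⟨i, Finset.mem_univ _, rfl⟩, hi⟩
  · obtain ⟨i, -, rfl⟩ := Finset.mem_map.1 hH
    obtain ⟨j, -, rfl⟩ := Finset.mem_map.1 hK
    refine (Subgroup.eq_bot_iff_forall _).2 fun g hg => ?_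
    exact inPart_disjoint i j (fun h => hne (h ▸ rfl)) g hg.1 hg.2

end SymmFour

theorem rho_symmGroup_four : rhoG (Equiv.Perm (Fin 4)) = 10 := by
  have hmem : 10 ∈ {n | ∃ P : Finset (Subgroup (Equiv.Perm (Fin 4))), IsPartitionOf P ∧ P.card = n} :=
    ⟨_, SymmFour.isPartitionOf_part, by simp⟩
  refine le_antisymm (Nat.sInf_le hmem) (le_csInf ⟨10, hmem⟩ ?_)
  rintro n ⟨P, hP, rfl⟩
  exact SymmFour.ten_le_card hP
end

section
/- A finite solvable group G is cyclic if and only if every chief factor of G has at most one complement; that is, if and only if for all normal subgroups N ≤ L of G such that L/N is a minimal normal subgroup of G/N, there exists at most one subgroup K of G with N ≤ K, K ∩ L = N and KL = G. -/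
/-!
For the forward direction, a complement `K` of `L/N` satisfies `K/N ≅ G/L`, so all complements
have the same order, and a finite cyclic group has at most one subgroup of each order.

For the converse, let `M` be a maximal subgroup of the solvable group `G`, let `N` be its normal
core, and let `L/N` be a chief factor. Since `L/N` is abelian, `M` is a complement of `L/N`
(`isCompl_core_of_isCoatom`). The conjugates of `M` are complements as well, so uniqueness forces
`M` to be normal (`normal_of_isCoatom`), and therefore of prime index.
If `M₁ ≠ M₂` were maximal of the same index `p`, then `G/(M₁ ⊓ M₂) ≅ C_p × C_p` would contain a
third subgroup of index `p`, obtained as the kernel of the product of two characters with kernels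
`M₁` and `M₂`; this and `M₂` would be two complements of the chief factor `M₁/(M₁ ⊓ M₂)`
(`eq_of_index_eq`). So distinct maximal subgroups are normal of distinct prime indices. A Chinese
remainder argument then gives an element outside all maximal subgroups, and such an element
generates `G`.
-/

open Pointwise

namespace ChiefComplement

variable {G : Type*} [Group G]

/-- `L/N` is a chief factor of `G`. -/
def IsChief (N L : Subgroup G) : Prop :=
  N.Normal ∧ L.Normal ∧ N < L ∧
    ∀ M : Subgroup G, M.Normal → N ≤ M → M ≤ L → M = N ∨ M = L

/-- `K` is a complement of the factor `L/N`. -/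
def IsCompl' (N L K : Subgroup G) : Prop :=
  N ≤ K ∧ K ⊓ L = N ∧ (K : Set G) * (L : Set G) = Set.univ

/-- Every chief factor of `G` has at most one complement. -/
def UniqueCompl (G : Type*) [Group G] : Prop :=
  ∀ N L K₁ K₂ : Subgroup G, IsChief N L → IsCompl' N L K₁ → IsCompl' N L K₂ → K₁ = K₂

lemma mul_eq_univ_of_sup_eq_top {K L : Subgroup G} [L.Normal] (h : K ⊔ L = ⊤) :
    (K : Set G) * (L : Set G) = Set.univ := by
  rw [← Subgroup.mul_normal, h, Subgroup.coe_top]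

lemma IsCompl'.sup_eq_top {N L K : Subgroup G} [L.Normal] (h : IsCompl' N L K) : K ⊔ L = ⊤ := by
  apply SetLike.coe_injective
  rw [Subgroup.mul_normal, h.2.2, Subgroup.coe_top]

/-- All complements have the same order, since `K/N ≅ G/L`. -/
lemma IsCompl'.card_eq {N L K : Subgroup G} [L.Normal] (h : IsCompl' N L K) :
    Nat.card K = Nat.card N * L.index := by
  rw [← L.relIndex_top_right, ← h.sup_eq_top, Subgroup.relIndex_sup_right,
    ← Subgroup.inf_relIndex_left, h.2.1, ← Subgroup.relIndex_bot_left,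
    ← Subgroup.relIndex_bot_left N, Subgroup.relIndex_mul_relIndex _ _ _ bot_le h.1]

lemma eq_of_card_eq [Finite G] [IsCyclic G] {K₁ K₂ : Subgroup G}
    (h : Nat.card K₁ = Nat.card K₂) : K₁ = K₂ := by
  classical
  have := Fintype.ofFinite G
  -- A subgroup of order `n` is the full solution set of `a ^ n = 1`, which has at most `n` elements.
  have key : ∀ K : Subgroup G, (K : Set G).toFinset =
      Finset.univ.filter (fun a : G => a ^ Nat.card K = 1) := by
    intro K
    apply Finset.eq_of_subset_of_card_le
    · intro a ha
      simp only [Set.mem_toFinset, SetLike.mem_coe] at ha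
      exact Finset.mem_filter.2 ⟨Finset.mem_univ _,
        congrArg Subtype.val (pow_card_eq_one' (x := (⟨a, ha⟩ : K)))⟩
    · refine (IsCyclic.card_pow_eq_one_le Nat.card_pos).trans ?_
      rw [Set.toFinset_card, Nat.card_eq_fintype_card]
      exact le_rfl
  apply SetLike.coe_injective
  rw [← Set.toFinset_inj, key, key, h]

lemma uniqueCompl_of_isCyclic [Finite G] [IsCyclic G] : UniqueCompl G := by
  intro N L K₁ K₂ hc h1 h2
  have := hc.2.1
  exact eq_of_card_eq (h1.card_eq.trans h2.card_eq.symm)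

/-- A chief factor of a solvable group is abelian. -/
lemma IsChief.commutator_le [Group.IsSolvable G] {N L : Subgroup G} (h : IsChief N L) :
    ⁅L, L⁆ ≤ N := by
  obtain ⟨hN, hL, hlt, hmin⟩ := h
  have hmap : L.map (QuotientGroup.mk' N) ≠ ⊥ := by
    intro h0
    rw [Subgroup.map_eq_bot_iff, QuotientGroup.ker_mk'] at h0
    exact absurd h0 hlt.not_ge
  have h1 := Group.IsSolvable.commutator_lt_of_ne_bot hmap
  rcases hmin (⁅L, L⁆ ⊔ N) inferInstance le_sup_right
    (sup_le (Subgroup.commutator_le_left L L) hlt.le) with h2 | h2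
  · exact le_sup_left.trans h2.le
  · exfalso
    rw [← Subgroup.map_commutator] at h1
    apply h1.ne
    conv_rhs => rw [← h2]
    rw [Subgroup.map_sup, (Subgroup.map_eq_bot_iff _).2 (QuotientGroup.ker_mk' N).ge, sup_bot_eq]

/-- There is a chief factor above every proper normal subgroup. -/
lemma exists_isChief [Finite G] (N : Subgroup G) [hN : N.Normal] (h : N ≠ ⊤) :
    ∃ L, IsChief N L := by
  obtain ⟨L, hL⟩ := Set.Finite.exists_minimal (Set.toFinite {L : Subgroup G | L.Normal ∧ N < L})
    ⟨⊤, inferInstance, lt_top_iff_ne_top.2 h⟩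
  refine ⟨L, hN, hL.prop.1, hL.prop.2, fun M hM h1 h2 => ?_⟩
  rcases h1.eq_or_lt with h3 | h3
  · exact Or.inl h3.symm
  · exact Or.inr (le_antisymm h2 (hL.le_of_le ⟨hM, h3⟩ h2))

/-- A maximal subgroup complements every chief factor lying directly above its normal core. -/
lemma isCompl_core_of_isCoatom [Group.IsSolvable G] {M L : Subgroup G} (hM : IsCoatom M)
    (h : IsChief M.normalCore L) : IsCompl' M.normalCore L M := by
  have hL := h.2.1
  have hLM : ¬ L ≤ M := fun hle => h.2.2.1.not_ge (Subgroup.normal_le_normalCore.2 hle)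
  have hsup : M ⊔ L = ⊤ := hM.2 _ (lt_of_le_of_ne le_sup_left fun e => hLM (e ▸ le_sup_right))
  refine ⟨M.normalCore_le, ?_, mul_eq_univ_of_sup_eq_top hsup⟩
  -- `M ⊓ L` is normalized by `M` because `L` is normal, and by `L` because `L/N` is abelian.
  have hn : (M ⊓ L).Normal := by
    rw [← Subgroup.normalizer_eq_top_iff, eq_top_iff, ← hsup, sup_le_iff]
    constructor
    · rw [Subgroup.le_normalizer_iff]
      exact fun m hm d hd => ⟨M.mul_mem (M.mul_mem hm hd.1) (M.inv_mem hm), hL.conj_mem d hd.2 m⟩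
    · rw [Subgroup.le_normalizer_iff_commutator_le_right]
      exact ((Subgroup.commutator_mono le_rfl inf_le_right).trans h.commutator_le).trans
        (le_inf M.normalCore_le h.2.2.1.le)
  exact le_antisymm (Subgroup.normal_le_normalCore.2 inf_le_left)
    (le_inf M.normalCore_le h.2.2.1.le)

/-- Conjugates of a complement are complements of the same factor. -/
lemma IsCompl'.conj {N L K : Subgroup G} [hN : N.Normal] [hL : L.Normal] (h : IsCompl' N L K)
    (g : G) : IsCompl' N L (K.map (MulAut.conj g).toMonoidHom) := by
  obtain ⟨h1, h2, h3⟩ := h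
  have hNm : N.map (MulAut.conj g).toMonoidHom = N := Subgroup.Normal.map_conj_eq N g
  have hLm : L.map (MulAut.conj g).toMonoidHom = L := Subgroup.Normal.map_conj_eq L g
  refine ⟨?_, ?_, ?_⟩
  · conv_lhs => rw [← hNm]
    exact Subgroup.map_mono h1
  · conv_lhs => rw [← hLm]
    rw [← Subgroup.map_inf _ _ _ (MulAut.conj g).injective, h2, hNm]
  · apply mul_eq_univ_of_sup_eq_top
    conv_lhs => rw [← hLm]
    rw [← Subgroup.map_sup]
    rw [IsCompl'.sup_eq_top ⟨h1, h2, h3⟩, Subgroup.map_top_of_surjective _ (MulAut.conj g).surjective]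

/-- The core of `M` has a chief factor above it, complemented by every conjugate of `M`. -/
lemma normal_of_isCoatom [Finite G] [Group.IsSolvable G] (hu : UniqueCompl G) {M : Subgroup G}
    (hM : IsCoatom M) : M.Normal := by
  have hcore : M.normalCore ≠ ⊤ := fun h => hM.1 (top_le_iff.1 (h ▸ M.normalCore_le))
  obtain ⟨L, hL⟩ := exists_isChief M.normalCore hcore
  have := hL.2.1
  have hc := isCompl_core_of_isCoatom hM hL
  refine ⟨fun m hm g => ?_⟩
  rw [hu _ _ _ _ hL hc (hc.conj g)]
  exact ⟨m, hm, rfl⟩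

lemma prime_index [Group.IsSolvable G] {M : Subgroup G} [M.Normal] (hM : IsCoatom M) :
    M.index.Prime := by
  have hs : IsSimpleGroup (G ⧸ M) := by
    have : Nontrivial (G ⧸ M) := QuotientGroup.nontrivial_iff.2 hM.1
    refine ⟨fun H _ => ?_⟩
    have hsurj := QuotientGroup.mk'_surjective M
    have hle : M ≤ H.comap (QuotientGroup.mk' M) := by
      conv_lhs => rw [← QuotientGroup.ker_mk' M]
      exact Subgroup.ker_le_comap _ _
    rw [← Subgroup.map_comap_eq_self_of_surjective hsurj H]
    rcases hM.le_iff.1 hle with h | h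
    · right; rw [h, Subgroup.map_top_of_surjective _ hsurj]
    · left; rw [h, Subgroup.map_eq_bot_iff, QuotientGroup.ker_mk']
  have hcomm : ∀ a b : G ⧸ M, a * b = b * a :=
    IsSimpleGroup.comm_iff_isSolvable.2 inferInstance
  let _ : CommGroup (G ⧸ M) := { (inferInstance : Group (G ⧸ M)) with mul_comm := hcomm }
  rw [Subgroup.index_eq_card]
  exact IsSimpleGroup.prime_card

/-- A normal subgroup of prime index `p` is the kernel of a character of order `p`. -/
lemma exists_ker_eq {M : Subgroup G} [M.Normal] {p : ℕ} [Fact p.Prime] (h : M.index = p) :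
    ∃ φ : G →* Multiplicative (ZMod p), φ.ker = M := by
  have e : G ⧸ M ≃* Multiplicative (ZMod p) :=
    mulEquivOfPrimeCardEq (p := p) (by rw [← Subgroup.index_eq_card, h]) (by simp)
  refine ⟨e.toMonoidHom.comp (QuotientGroup.mk' M), ?_⟩
  ext x
  simp

/-- For distinct maximal normal subgroups, `M₁/(M₁ ⊓ M₂)` is a chief factor. -/
lemma isChief_inf {M₁ M₂ : Subgroup G} [hn₁ : M₁.Normal] [hn₂ : M₂.Normal] (h₁ : IsCoatom M₁)
    (h₂ : IsCoatom M₂) (hne : M₁ ≠ M₂) : IsChief (M₁ ⊓ M₂) M₁ := by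
  refine ⟨inferInstance, hn₁, lt_of_le_of_ne inf_le_left fun e => ?_, fun M hM hl hu => ?_⟩
  · rcases h₁.le_iff.1 (inf_eq_left.1 e) with h | h
    · exact h₂.1 h
    · exact hne h.symm
  · rcases h₂.le_iff.1 (le_sup_left : M₂ ≤ M₂ ⊔ M) with h | h
    · right
      refine le_antisymm hu fun m hm => ?_
      obtain ⟨a, ha, b, hb, rfl⟩ := Subgroup.mem_sup_of_normal_right.1 (h ▸ Subgroup.mem_top m)
      have : a ∈ M₁ := by simpa using M₁.mul_mem hm (M₁.inv_mem (hu hb))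
      exact M.mul_mem (hl ⟨this, ha⟩) hb
    · left
      exact le_antisymm (le_inf hu (h ▸ le_sup_right)) hl

lemma isCompl_of_inf_eq {M₁ M₂ K : Subgroup G} [M₁.Normal] (h₁ : IsCoatom M₁)
    (hK : ¬ K ≤ M₁) (hinf : K ⊓ M₁ = M₁ ⊓ M₂) : IsCompl' (M₁ ⊓ M₂) M₁ K :=
  ⟨hinf ▸ inf_le_left, hinf, mul_eq_univ_of_sup_eq_top <|
    h₁.2 _ (lt_of_le_of_ne le_sup_right fun e => hK (e ▸ le_sup_left))⟩

/-- For `M₁ ≠ M₂` of index `p`, a third subgroup of index `p` containing `M₁ ⊓ M₂` would be a second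
complement of `M₁/(M₁ ⊓ M₂)` besides `M₂`. -/
lemma eq_of_index_eq [Finite G] (hu : UniqueCompl G) {M₁ M₂ : Subgroup G} [M₁.Normal] [M₂.Normal]
    (h₁ : IsCoatom M₁) (h₂ : IsCoatom M₂) (hp : M₁.index.Prime) (he : M₂.index = M₁.index) :
    M₁ = M₂ := by
  by_contra hne
  obtain ⟨p, hpe⟩ : ∃ p, p = M₁.index := ⟨_, rfl⟩
  have : Fact p.Prime := ⟨hpe ▸ hp⟩
  have h21 : ¬ M₂ ≤ M₁ := fun h => (h₂.le_iff.1 h).elim h₁.1 hne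
  obtain ⟨φ, hφ⟩ := exists_ker_eq hpe.symm
  obtain ⟨ψ, hψ⟩ := exists_ker_eq (he.trans hpe.symm)
  have hinf : (φ * ψ).ker ⊓ M₁ = M₁ ⊓ M₂ := by
    ext x
    rw [← hφ, ← hψ]
    simp only [Subgroup.mem_inf, MonoidHom.mem_ker, MonoidHom.mul_apply]
    constructor
    · rintro ⟨h, h'⟩; rw [h', one_mul] at h; exact ⟨h', h⟩
    · rintro ⟨h, h'⟩; simp [h, h']
  -- If the new kernel were contained in `M₁` then, having index at most `p`, it would equal `M₁`.
  have hK : ¬ (φ * ψ).ker ≤ M₁ := by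
    intro hle
    have hcard : (φ * ψ).ker.index ≤ p := by
      rw [Subgroup.index_ker]
      refine (Nat.card_le_card_of_injective _ Subtype.val_injective).trans ?_
      simp
    have hrel := Subgroup.relIndex_mul_index hle
    have hpos : 0 < p := (Fact.out : p.Prime).pos
    have hne0 : (φ * ψ).ker.index ≠ 0 := Subgroup.index_ne_zero_of_finite
    have h1 : (φ * ψ).ker.relIndex M₁ = 1 := by
      rw [← hpe] at hrel
      have : (φ * ψ).ker.relIndex M₁ ≠ 0 := by
        intro h0; rw [h0, zero_mul] at hrel; exact hne0 hrel.symm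
      have : (φ * ψ).ker.relIndex M₁ ≤ 1 := by
        by_contra! hlt
        nlinarith
      omega
    have h2 : (φ * ψ).ker = M₁ := le_antisymm hle (Subgroup.relIndex_eq_one.1 h1)
    rw [h2, inf_idem] at hinf
    have h12 : M₁ ≤ M₂ := inf_eq_left.1 hinf.symm
    exact (h₁.le_iff.1 h12).elim h₂.1 fun h => hne h.symm
  have heq := hu _ _ _ _ (isChief_inf h₁ h₂ hne) (isCompl_of_inf_eq h₁ hK hinf)
    (isCompl_of_inf_eq h₁ h21 (inf_comm _ _))
  apply h21
  intro x hx
  have hx' := hx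
  rw [← heq] at hx'
  rw [← hψ] at hx
  rw [← hφ]
  rw [MonoidHom.mem_ker] at hx hx' ⊢
  rwa [MonoidHom.mul_apply, hx, mul_one] at hx'

/-- If the maximal subgroups are normal of pairwise distinct prime indices, then `G` is cyclic. -/
lemma isCyclic_of_coatoms [Finite G] (hn : ∀ M : Subgroup G, IsCoatom M → M.Normal)
    (hp : ∀ M : Subgroup G, IsCoatom M → M.index.Prime)
    (hinj : ∀ M₁ M₂ : Subgroup G, IsCoatom M₁ → IsCoatom M₂ → M₁.index = M₂.index → M₁ = M₂) :
    IsCyclic G := by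
  classical
  have := Fintype.ofFinite (Subgroup G)
  let S : G → Finset (Subgroup G) := fun x => Finset.univ.filter fun M => IsCoatom M ∧ x ∈ M
  -- Choose `x` lying in as few maximal subgroups as possible.
  obtain ⟨x, hx⟩ := Finite.exists_min fun x : G => (S x).card
  have hx0 : ∀ M : Subgroup G, IsCoatom M → x ∉ M := by
    intro M hM hxM
    have hMn := hn M hM
    obtain ⟨g, hg⟩ : ∃ g, g ∉ M := by
      by_contra! h
      exact hM.1 ((Subgroup.eq_top_iff' M).2 h)
    -- `g ^ n` lies in every other maximal subgroup but not in `M`, by coprimality of the indices.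
    let T : Finset (Subgroup G) := Finset.univ.filter fun K => IsCoatom K ∧ K ≠ M
    let n : ℕ := ∏ K ∈ T, K.index
    have hcop : Nat.Coprime n M.index := by
      refine Nat.Coprime.prod_left fun K hK => ?_
      obtain ⟨hK1, hK2⟩ := (Finset.mem_filter.1 hK).2
      exact (Nat.coprime_primes (hp K hK1) (hp M hM)).2 fun h => hK2 (hinj K M hK1 hM h)
    have hyK : ∀ K : Subgroup G, IsCoatom K → K ≠ M → g ^ n ∈ K := by
      intro K hK hKM
      have := hn K hK
      obtain ⟨m, hm⟩ : K.index ∣ n :=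
        Finset.dvd_prod_of_mem _ (Finset.mem_filter.2 ⟨Finset.mem_univ _, hK, hKM⟩)
      rw [hm, pow_mul]
      exact K.pow_mem (K.pow_index_mem g) m
    have hyM : g ^ n ∉ M := by
      intro h
      apply hg
      have h1 : (g : G ⧸ M) ^ n = 1 := by
        rw [← QuotientGroup.mk_pow]; exact (QuotientGroup.eq_one_iff _).2 h
      have h2 : (g : G ⧸ M) ^ M.index = 1 := by
        rw [← QuotientGroup.mk_pow]; exact (QuotientGroup.eq_one_iff _).2 (M.pow_index_mem g)
      have h3 := Nat.eq_one_of_dvd_coprimes hcop (orderOf_dvd_of_pow_eq_one h1)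
        (orderOf_dvd_of_pow_eq_one h2)
      exact (QuotientGroup.eq_one_iff _).1 (orderOf_eq_one_iff.1 h3)
    refine (hx (x * g ^ n)).not_gt (Finset.card_lt_card ?_)
    rw [Finset.ssubset_iff_of_subset]
    · refine ⟨M, Finset.mem_filter.2 ⟨Finset.mem_univ _, hM, hxM⟩, fun h => hyM ?_⟩
      exact (M.mul_mem_cancel_left hxM).1 (Finset.mem_filter.1 h).2.2
    · intro K hK
      obtain ⟨hK1, hK2⟩ := (Finset.mem_filter.1 hK).2
      refine Finset.mem_filter.2 ⟨Finset.mem_univ _, hK1, ?_⟩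
      have hKM : K ≠ M := by
        rintro rfl
        exact hyM ((K.mul_mem_cancel_left hxM).1 hK2)
      exact (K.mul_mem_cancel_right (hyK K hK1 hKM)).1 hK2
  have htop : Subgroup.zpowers x = ⊤ := by
    rcases eq_top_or_exists_le_coatom (Subgroup.zpowers x) with h | ⟨M, hM, hle⟩
    · exact h
    · exact absurd (hle (Subgroup.mem_zpowers x)) (hx0 M hM)
  exact ⟨x, (Subgroup.eq_top_iff' _).1 htop⟩

end ChiefComplement

open ChiefComplement in
theorem solvable_cyclic_iff_chief_factors_at_most_one_complement
    (G : Type*) [Group G] [Finite G] (hs : IsSolvable G) :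
    IsCyclic G ↔
      ∀ N L : Subgroup G, N.Normal → L.Normal → N < L →
        (∀ M : Subgroup G, M.Normal → N ≤ M → M ≤ L → M = N ∨ M = L) →
        ∀ K₁ K₂ : Subgroup G,
          (N ≤ K₁ ∧ K₁ ⊓ L = N ∧ (K₁ : Set G) * (L : Set G) = Set.univ) →
          (N ≤ K₂ ∧ K₂ ⊓ L = N ∧ (K₂ : Set G) * (L : Set G) = Set.univ) →
          K₁ = K₂ := by
  constructor
  · intro _ N L hN hL hlt hmin K₁ K₂ h1 h2
    exact uniqueCompl_of_isCyclic N L K₁ K₂ ⟨hN, hL, hlt, hmin⟩ h1 h2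
  · intro h
    have hs' : Group.IsSolvable G := hs
    have hu : UniqueCompl G := fun N L K₁ K₂ hc h1 h2 =>
      h N L hc.1 hc.2.1 hc.2.2.1 hc.2.2.2 K₁ K₂ h1 h2
    have hn : ∀ M : Subgroup G, IsCoatom M → M.Normal := fun M hM => normal_of_isCoatom hu hM
    have hp : ∀ M : Subgroup G, IsCoatom M → M.index.Prime := fun M hM =>
      have := hn M hM
      prime_index hM
    refine isCyclic_of_coatoms hn hp fun M₁ M₂ h₁ h₂ he => ?_
    have := hn M₁ h₁
    have := hn M₂ h₂
    exact eq_of_index_eq hu h₁ h₂ (hp M₁ h₁) he.symm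
end
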